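/- There exist universal constants c > 0, C > 0 and m₀ such that for all integers m ≥ m₀, n with n² ≥ m, r ≥ 1, and k with √m·r ≤ k ≤ m: if a randomized t-round adaptive algorithm making k exact linear measurements per round is such that for every n×n real matrix A with at most m nonzero entries it outputs a matrix B of rank at most r satisfying ‖A − B‖ ≤ 2·σ_{r+1}(A) with probability at least 1 − m^{−C} (over the seed), then t ≥ c·log(m/k). -/

import Mathlib

/-!
The hard inputs are Gaussian matrices with a planted rank-one spike. Put `s = ⌊√m⌋`; the input is
an `s × s` block `b + w`, zero-padded to size `n × n`, where `b` has independent standard Gaussian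
entries and `w = (100 / √s) u vᵀ` for uniformly random sign vectors `u, v`. It has at most `m`
nonzero entries, `‖w‖_F² = 10000 s`, and `‖b‖ ≤ 16 √s` except with probability `e^{-s}`
(`measure_badSet_le`).

*Success reveals the spike.* Since `σ_{r+1}(b + w) ≤ ‖b‖`, an output `B` of rank at most `r` with
error at most `2 σ_{r+1}` satisfies `‖w - B'‖ ≤ 48 √s` on the block, so the space of matrices with
columns in the column space of `B'`, whose dimension is at most `s r ≤ k`, captures more than
`5000 s` of `‖w‖_F²` (`le_projection_of_success`). This space is treated as the queries of one more
round. The queries of the first `j` rounds restricted to the block thus span an increasing family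
of at most `j k`-dimensional subspaces `V_j(b)` for `j ≤ t + 1`, and `V_{j+1}(b)` depends only on
the component of `b` in `V_j(b)` (`AdaptiveFlag`, `adaptiveFlag_flag`).

*One round multiplies the information by a constant at most.* Given the visible component, the
hidden component of a Gaussian vector is a fresh Gaussian, even for an adaptively chosen flag
(`lintegral_resample`). Hence the likelihood ratio between the planted and the unplanted model,
seen through `V_j`, is `exp (⟪Π w, b⟫ - ‖Π w‖² / 2)` with `Π` the projection onto `V_j(b)`
(`lintegral_shift`). As long as `‖Π w‖² ≤ τ` it exceeds `exp (2 τ)` with planted probability at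
most `exp (-τ)`, and below that level probabilities can be computed in the unplanted model
(`measure_step_le`). There `V_{j+1}` is independent of `w`, and a fixed subspace of dimension `d`
captures more than `τ'` from at most a fraction `exp (d / (2 s) - τ' / 80000)` of all spikes, by an
exponential moment bound for quadratic forms of signs (`card_spike_le`). With the thresholds
`thr (k / s) j = 4 (k / s) 320000 ^ j` the failure probabilities are summable, so that with
probability at least `3 / 4` the spike has squared projection at most `thr (k / s) j` after `j`
rounds (`sum_measure_spike_le`, `sum_exp_thr_le`).

Comparing both parts, `5000 s ≤ 4 (k / s) 320000 ^ (t + 1)` (`thr_lower_bound`), i.e.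
`log (m / k) ≤ (t + 1) log 320000`. Without measurements the output does not depend on the input,
so `t ≥ 1` (`rounds_ne_zero`) and the bound follows with `c = 1 / (2 log 320000)`. A success
probability of `3 / 4` is all that is used, whence `C = 1` and `m₀ = 4`.
-/

open MeasureTheory ProbabilityTheory Matrix
open scoped ENNReal Classical

noncomputable section

/-- Squared Euclidean norm of a finitely-indexed real vector. -/
def sqNorm {ι : Type*} [Fintype ι] (x : ι → ℝ) : ℝ := ∑ i, x i ^ 2

/-- Squared Frobenius norm of a real matrix. -/
def frobSq {m n : Type*} [Fintype m] [Fintype n] (A : Matrix m n ℝ) : ℝ :=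
  ∑ i, ∑ j, A i j ^ 2

/-- Spectral (ℓ₂ operator) norm of a real matrix. -/
def specNorm {m n : Type*} [Fintype m] [Fintype n] (A : Matrix m n ℝ) : ℝ :=
  sSup ((fun x : n → ℝ => Real.sqrt (sqNorm (A.mulVec x))) '' {x | sqNorm x ≤ 1})

/-- `i`-th largest singular value (1-based), characterized via
`σ_i(A) = min {‖A − X‖ : rank X ≤ i − 1}`. -/
def singVal {m n : Type*} [Fintype m] [Fintype n] (A : Matrix m n ℝ) (i : ℕ) : ℝ :=
  sInf {c | ∃ X : Matrix m n ℝ, X.rank ≤ i - 1 ∧ c = specNorm (A - X)}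

/-- Flattening of an `n × n` matrix into a vector in `ℝ^{n²}`. -/
def vec (n : ℕ) (A : Matrix (Fin n) (Fin n) ℝ) : Fin (n * n) → ℝ :=
  fun i => A (finProdFinEquiv.symm i).1 (finProdFinEquiv.symm i).2

/-- `u ⊗ v = vec (u vᵀ) ∈ ℝ^{n²}`. -/
def tensor {n : ℕ} (u v : Fin n → ℝ) : Fin (n * n) → ℝ :=
  vec n (Matrix.of fun i j => u i * v j)

/-- Standard Gaussian measure on `ι → ℝ`. -/
def stdGaussian (ι : Type*) [Fintype ι] : Measure (ι → ℝ) :=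
  Measure.pi fun _ => gaussianReal 0 1

/-- Standard Gaussian measure on `n × n` matrices (as `Fin n → Fin n → ℝ`). -/
def stdGaussianMat (n : ℕ) : Measure (Fin n → Fin n → ℝ) :=
  Measure.pi fun _ => stdGaussian (Fin n)

/-- Query maps of a deterministic `t`-round adaptive algorithm making `k` linear
measurements per round on inputs in `ℝ^N`. -/
def QueryMaps (N k t : ℕ) : Type :=
  (j : Fin t) → (Fin (j : ℕ) → (Fin k → ℝ)) → Matrix (Fin k) (Fin N) ℝ

namespace QueryMaps

variable {N k t : ℕ}

/-- Restriction of a round-`j` history to the first `i` rounds. -/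
def prefixHist {j : Fin t} (h : Fin (j : ℕ) → Fin k → ℝ) {i : Fin t}
    (hij : (i : ℕ) < (j : ℕ)) : Fin (i : ℕ) → Fin k → ℝ :=
  fun l => h ⟨l.1, l.isLt.trans hij⟩

/-- Validity of query maps: measurability, orthonormal rows within each round, and
orthogonality across rounds along consistent histories. -/
def Valid (Q : QueryMaps N k t) : Prop :=
  (∀ (j : Fin t) (i : Fin k) (l : Fin N), Measurable fun h => Q j h i l) ∧
  (∀ (j : Fin t) (h : Fin (j : ℕ) → Fin k → ℝ), Q j h * (Q j h)ᵀ = 1) ∧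
  (∀ (j i : Fin t) (hij : (i : ℕ) < (j : ℕ)) (h : Fin (j : ℕ) → Fin k → ℝ),
      Q j h * (Q i (prefixHist h hij))ᵀ = 0)

/-- Responses of the algorithm under exact linear measurements of `a`. -/
def resp (Q : QueryMaps N k t) (a : Fin N → ℝ) (j : Fin t) : Fin k → ℝ :=
  (Q j fun i => resp Q a ⟨i.1, i.isLt.trans j.isLt⟩).mulVec a
termination_by (j : ℕ)
decreasing_by exact i.isLt

/-- Responses of the algorithm under noisy linear measurements of `a`, with fresh
per-round noise `g`. -/
def nresp (Q : QueryMaps N k t) (a : Fin N → ℝ) (g : Fin t → Fin k → ℝ) (j : Fin t) :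
    Fin k → ℝ :=
  ((Q j fun i => nresp Q a g ⟨i.1, i.isLt.trans j.isLt⟩).mulVec a) + g j
termination_by (j : ℕ)
decreasing_by exact i.isLt

/-- The `tk × N` matrix stacking all the query matrices realized along the run of the
algorithm on input `a` (exact measurements). -/
def runMat (Q : QueryMaps N k t) (a : Fin N → ℝ) : Matrix (Fin t × Fin k) (Fin N) ℝ :=
  Matrix.of fun p l =>
    Q p.1 (fun i => resp Q a ⟨i.1, i.isLt.trans p.1.isLt⟩) p.2 l

end QueryMaps

/-- Kullback–Leibler divergence, valued in `[0, ∞]`, defined with the natural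
logarithm. -/
def klDiv {Ω : Type*} [MeasurableSpace Ω] (P Q : Measure Ω) : ℝ≥0∞ :=
  if P ≪ Q ∧ Integrable (fun x => Real.log ((P.rnDeriv Q x).toReal)) P then
    ENNReal.ofReal (∫ x, Real.log ((P.rnDeriv Q x).toReal) ∂P)
  else ⊤


/-- The rank-`r` plant `Σ_{i=1}^r uᵢ vᵢᵀ` built from the rows of `U` and `V`. -/
def plant {n r : ℕ} (U V : Fin r → Fin n → ℝ) : Matrix (Fin n) (Fin n) ℝ :=
  Matrix.of fun i j => ∑ l, U l i * V l j

/-- Schatten-`p` norm (real `p`), via the singular values. -/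
def schattenNorm {n : ℕ} (p : ℝ) (A : Matrix (Fin n) (Fin n) ℝ) : ℝ :=
  (∑ i ∈ Finset.range n, singVal A (i + 1) ^ p) ^ (1 / p)

/-- Ky-Fan `p` norm: sum of the `p` largest singular values. -/
def kyFanNorm {n : ℕ} (p : ℕ) (A : Matrix (Fin n) (Fin n) ℝ) : ℝ :=
  ∑ i ∈ Finset.range p, singVal A (i + 1)

/-! ### Gaussian measures: resampling and the Cameron–Martin formula -/

section Gauss
variable {E : Type*} [NormedAddCommGroup E] [InnerProductSpace ℝ E] [FiniteDimensional ℝ E]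
  [MeasurableSpace E] [BorelSpace E]

lemma lintegral_exp_inner_gaussian (ξ : E) :
    ∫⁻ x, ENNReal.ofReal (Real.exp (inner ℝ ξ x)) ∂(ProbabilityTheory.stdGaussian E)
      = ENNReal.ofReal (Real.exp (‖ξ‖ ^ 2 / 2)) := by
  have hmap : (ProbabilityTheory.stdGaussian E).map (fun x => inner ℝ ξ x)
      = gaussianReal 0 (‖ξ‖ ^ 2).toNNReal := by
    have h := IsGaussian.map_eq_gaussianReal (μ := ProbabilityTheory.stdGaussian E)
      (innerSL ℝ ξ)
    rw [variance_dual_stdGaussian, integral_strongDual_stdGaussian] at h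
    simp only [innerSL_apply_norm] at h
    exact h
  have hintg : Integrable (fun x => Real.exp (inner ℝ ξ x)) (ProbabilityTheory.stdGaussian E) := by
    have := integrable_exp_mul_gaussianReal (μ := 0) (v := (‖ξ‖ ^ 2).toNNReal) 1
    rw [← hmap, integrable_map_measure (by fun_prop) (by fun_prop)] at this
    simpa [Function.comp_def] using this
  rw [← ofReal_integral_eq_lintegral_ofReal hintg (ae_of_all _ fun x => (Real.exp_pos _).le)]
  have := mgf_gaussianReal hmap 1
  simp only [mgf, one_mul] at this
  rw [this]
  simp [Real.coe_toNNReal _ (sq_nonneg ‖ξ‖)]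

/-- A finite Laplace transform determines the measure. -/
lemma measure_ext_of_laplace {μ ν : Measure E} [IsProbabilityMeasure μ] [IsFiniteMeasure ν]
    (hfin : ∀ ξ : E, ∫⁻ x, ENNReal.ofReal (Real.exp (inner ℝ ξ x)) ∂μ ≠ ∞)
    (h : ∀ ξ : E, ∫⁻ x, ENNReal.ofReal (Real.exp (inner ℝ ξ x)) ∂μ
      = ∫⁻ x, ENNReal.ofReal (Real.exp (inner ℝ ξ x)) ∂ν) : μ = ν := by
  apply Measure.ext_of_charFun
  ext ξ
  have key : mgf (fun x => inner ℝ ξ x) μ = mgf (fun x => inner ℝ ξ x) ν := by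
    ext t
    have h1 := h (t • ξ)
    simp only [real_inner_smul_left] at h1
    rw [mgf, mgf, integral_eq_lintegral_of_nonneg_ae (ae_of_all _ fun x => (Real.exp_pos _).le)
      (by fun_prop), integral_eq_lintegral_of_nonneg_ae
        (ae_of_all _ fun x => (Real.exp_pos _).le) (by fun_prop), h1]
  have hset : integrableExpSet (fun x => inner ℝ ξ x) μ = Set.univ := by
    ext t
    simp only [integrableExpSet, Set.mem_ofPred_eq, Set.mem_univ, iff_true]
    refine ⟨by fun_prop, ?_⟩
    rw [hasFiniteIntegral_iff_ofReal (ae_of_all _ fun x => (Real.exp_pos _).le)]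
    have h1 := hfin (t • ξ)
    simp only [real_inner_smul_left] at h1
    exact h1.lt_top
  have h2 := eqOn_complexMGF_of_mgf key (x := Complex.I) (by simp [hset])
  simp only [complexMGF] at h2
  simp only [charFun_apply]
  simpa [real_inner_comm ξ, mul_comm] using h2

/-- Resampling the component orthogonal to a fixed subspace. -/
lemma lintegral_resample_fixed (W : Submodule ℝ E) (f : E → ℝ≥0∞) (hf : Measurable f) :
    ∫⁻ z₁, ∫⁻ z, f (W.starProjection z₁ + (z - W.starProjection z))
        ∂(ProbabilityTheory.stdGaussian E) ∂(ProbabilityTheory.stdGaussian E)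
      = ∫⁻ z, f z ∂(ProbabilityTheory.stdGaussian E) := by
  set γ := ProbabilityTheory.stdGaussian E
  have hm : Measurable fun p : E × E => W.starProjection p.1 + (p.2 - W.starProjection p.2) := by
    fun_prop
  have hmeas : (γ.prod γ).map
      (fun p : E × E => W.starProjection p.1 + (p.2 - W.starProjection p.2)) = γ := by
    have : IsProbabilityMeasure ((γ.prod γ).map
      (fun p : E × E => W.starProjection p.1 + (p.2 - W.starProjection p.2))) :=
      Measure.isProbabilityMeasure_map hm.aemeasurable
    have hval : ∀ ξ : E, ∫⁻ x, ENNReal.ofReal (Real.exp (inner ℝ ξ x)) ∂((γ.prod γ).map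
      (fun p : E × E => W.starProjection p.1 + (p.2 - W.starProjection p.2)))
        = ENNReal.ofReal (Real.exp (‖ξ‖ ^ 2 / 2)) := by
      intro ξ
      rw [lintegral_map (by fun_prop) hm, lintegral_prod _ (by fun_prop)]
      have e1 : ∀ x y : E, ENNReal.ofReal (Real.exp (inner ℝ ξ (W.starProjection x +
          (y - W.starProjection y)))) = ENNReal.ofReal (Real.exp (inner ℝ (W.starProjection ξ) x))
          * ENNReal.ofReal (Real.exp (inner ℝ (ξ - W.starProjection ξ) y)) := by
        intro x y
        rw [← ENNReal.ofReal_mul (Real.exp_pos _).le, ← Real.exp_add]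
        congr 2
        rw [inner_add_right, inner_sub_right, inner_sub_left,
          Submodule.inner_starProjection_left_eq_right, Submodule.inner_starProjection_left_eq_right]
      simp only [e1]
      simp_rw [lintegral_const_mul _ (show Measurable fun y : E =>
        ENNReal.ofReal (Real.exp (inner ℝ (ξ - W.starProjection ξ) y)) by fun_prop)]
      rw [lintegral_mul_const _ (by fun_prop), lintegral_exp_inner_gaussian,
        lintegral_exp_inner_gaussian, ← ENNReal.ofReal_mul (Real.exp_pos _).le, ← Real.exp_add]
      congr 2
      have : ‖ξ‖ ^ 2 = ‖W.starProjection ξ‖ ^ 2 + ‖ξ - W.starProjection ξ‖ ^ 2 := by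
        rw [Submodule.norm_sq_eq_add_norm_sq_starProjection ξ W, Submodule.starProjection_orthogonal_val]
      rw [this]; ring
    apply measure_ext_of_laplace
    · intro ξ; rw [hval]; exact ENNReal.ofReal_ne_top
    · intro ξ; rw [hval, lintegral_exp_inner_gaussian]
  conv_rhs => rw [← hmeas, lintegral_map hf hm]
  rw [lintegral_prod _ (by fun_prop)]

/-- Cameron–Martin formula for a fixed shift. -/
lemma lintegral_cameronMartin (w : E) (f : E → ℝ≥0∞) (hf : Measurable f) :
    ∫⁻ b, f (b + w) ∂(ProbabilityTheory.stdGaussian E)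
      = ∫⁻ b, f b * ENNReal.ofReal (Real.exp (inner ℝ w b - ‖w‖ ^ 2 / 2))
        ∂(ProbabilityTheory.stdGaussian E) := by
  set γ := ProbabilityTheory.stdGaussian E
  have hm : Measurable fun b : E => b + w := by fun_prop
  have hd : Measurable fun b : E => ENNReal.ofReal (Real.exp (inner ℝ w b - ‖w‖ ^ 2 / 2)) := by
    fun_prop
  have hr : ∀ ξ : E, ∫⁻ x, ENNReal.ofReal (Real.exp (inner ℝ ξ x)) ∂(γ.withDensity
      fun b : E => ENNReal.ofReal (Real.exp (inner ℝ w b - ‖w‖ ^ 2 / 2)))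
      = ENNReal.ofReal (Real.exp (inner ℝ ξ w + ‖ξ‖ ^ 2 / 2)) := by
    intro ξ
    rw [lintegral_withDensity_eq_lintegral_mul _ hd (by fun_prop)]
    have e1 : ∀ b : E, ((fun b : E => ENNReal.ofReal (Real.exp (inner ℝ w b - ‖w‖ ^ 2 / 2))) *
        fun x => ENNReal.ofReal (Real.exp (inner ℝ ξ x))) b =
        ENNReal.ofReal (Real.exp (- ‖w‖ ^ 2 / 2)) *
          ENNReal.ofReal (Real.exp (inner ℝ (w + ξ) b)) := by
      intro b
      simp only [Pi.mul_apply]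
      rw [← ENNReal.ofReal_mul (Real.exp_pos _).le, ← ENNReal.ofReal_mul (Real.exp_pos _).le,
        ← Real.exp_add, ← Real.exp_add, inner_add_left]
      congr 2; ring
    simp only [e1]
    rw [lintegral_const_mul _ (by fun_prop), lintegral_exp_inner_gaussian,
      ← ENNReal.ofReal_mul (Real.exp_pos _).le, ← Real.exp_add, norm_add_sq_real,
      real_inner_comm]
    congr 2; ring
  have hl : ∀ ξ : E, ∫⁻ x, ENNReal.ofReal (Real.exp (inner ℝ ξ x)) ∂(γ.map fun b => b + w)
      = ENNReal.ofReal (Real.exp (inner ℝ ξ w + ‖ξ‖ ^ 2 / 2)) := by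
    intro ξ
    rw [lintegral_map (by fun_prop) hm]
    simp only [inner_add_right, Real.exp_add, ENNReal.ofReal_mul (Real.exp_pos _).le]
    rw [lintegral_mul_const _ (by fun_prop), lintegral_exp_inner_gaussian, mul_comm]
  have : IsProbabilityMeasure (γ.map fun b => b + w) :=
    Measure.isProbabilityMeasure_map hm.aemeasurable
  have : IsFiniteMeasure (γ.withDensity
      fun b : E => ENNReal.ofReal (Real.exp (inner ℝ w b - ‖w‖ ^ 2 / 2))) := by
    refine ⟨?_⟩
    have := hr 0
    simp only [inner_zero_left, Real.exp_zero, ENNReal.ofReal_one, lintegral_one] at this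
    rw [this]; exact ENNReal.ofReal_lt_top
  have heq : (γ.map fun b => b + w) = γ.withDensity
      fun b : E => ENNReal.ofReal (Real.exp (inner ℝ w b - ‖w‖ ^ 2 / 2)) := by
    apply measure_ext_of_laplace
    · intro ξ; rw [hl]; exact ENNReal.ofReal_ne_top
    · intro ξ; rw [hl, hr]
  rw [← lintegral_map hf hm, heq, lintegral_withDensity_eq_lintegral_mul _ hd hf]
  simp only [Pi.mul_apply, mul_comm]
end Gauss

/-! ### Adaptive flags -/

section Flag
set_option linter.unusedSectionVars false
variable {E : Type*} [NormedAddCommGroup E] [InnerProductSpace ℝ E] [FiniteDimensional ℝ E]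
  [MeasurableSpace E] [BorelSpace E]

/-- The spaces measured by an adaptive procedure: `V j b` is the span of the directions queried in
the first `j` rounds on the input `b`. It increases with `j`, depends measurably on `b` (through
its orthogonal projection), and is adapted: the space after the next round is determined by the
component of the input in the present space. -/
structure AdaptiveFlag (V : ℕ → E → Submodule ℝ E) : Prop where
  zero : ∀ b, V 0 b = ⊥
  mono : ∀ j b, V j b ≤ V (j + 1) b
  meas : ∀ j, Measurable fun p : E × E => (V j p.1).starProjection p.2
  adapted : ∀ j b b', (V j b).starProjection b' = (V j b).starProjection b →
    V (j + 1) b' = V (j + 1) b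

/-- The point with the same visible part as `b`, and hidden part that of `z`. -/
def resample (W : Submodule ℝ E) (b z : E) : E :=
  W.starProjection b + (z - W.starProjection z)

lemma starProjection_resample (W : Submodule ℝ E) (b z : E) :
    W.starProjection (resample W b z) = W.starProjection b := by
  have h1 : ∀ x : E, W.starProjection (W.starProjection x) = W.starProjection x := fun x =>
    Submodule.starProjection_eq_self_iff.2 (Submodule.starProjection_apply_mem W x)
  simp [resample, map_add, map_sub, h1]

lemma starProjection_comp_of_le {W W' : Submodule ℝ E} (h : W ≤ W') (x : E) :
    W.starProjection (W'.starProjection x) = W.starProjection x := by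
  have hx : x - W'.starProjection x ∈ Wᗮ :=
    Submodule.orthogonal_le h (Submodule.sub_starProjection_mem_orthogonal x)
  have := (Submodule.starProjection_apply_eq_zero_iff (K := W)).2 hx
  rw [map_sub, sub_eq_zero] at this
  exact this.symm

namespace AdaptiveFlag
variable {V : ℕ → E → Submodule ℝ E}

lemma eq_of_visible (hV : AdaptiveFlag V) (j : ℕ) {b b' : E}
    (h : (V j b).starProjection b' = (V j b).starProjection b) : V j b' = V j b := by
  cases j with
  | zero => rw [hV.zero, hV.zero]
  | succ j =>
    apply hV.adapted
    rw [← starProjection_comp_of_le (hV.mono j b) b', h, starProjection_comp_of_le (hV.mono j b)]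

lemma measurable_proj (hV : AdaptiveFlag V) (j : ℕ) (w : E) :
    Measurable fun b => (V j b).starProjection w := by
  have h2 : Measurable fun b : E => (b, w) := measurable_id.prodMk measurable_const
  have h3 := (hV.meas j).comp h2
  simp only [Function.comp_def] at h3
  exact h3

lemma measurable_resample (hV : AdaptiveFlag V) (j : ℕ) :
    Measurable fun p : E × E => resample (V j p.1) p.1 p.2 := by
  have h := hV.meas j
  unfold resample
  exact (h.comp (measurable_fst.prodMk measurable_fst)).add (measurable_snd.sub h)

/-- Conditionally on the visible component of a Gaussian vector its hidden component is a fresh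
Gaussian, even though the visible space is chosen adaptively. -/
lemma lintegral_resample (hV : AdaptiveFlag V) (j : ℕ) (f : E → ℝ≥0∞) (hf : Measurable f) :
    ∫⁻ b, ∫⁻ z, f (resample (V j b) b z)
        ∂(ProbabilityTheory.stdGaussian E) ∂(ProbabilityTheory.stdGaussian E)
      = ∫⁻ z, f z ∂(ProbabilityTheory.stdGaussian E) := by
  induction j generalizing f with
  | zero => simp [hV.zero, resample]
  | succ j ih =>
    set γ := ProbabilityTheory.stdGaussian E
    have hm := hV.measurable_resample (j + 1)
    -- replace the outer `b` by a resampled copy of itself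
    have hg : Measurable fun b => ∫⁻ z, f (resample (V (j + 1) b) b z) ∂γ :=
      Measurable.lintegral_prod_right' (f := fun p : E × E => f (resample (V (j + 1) p.1) p.1 p.2))
        (hf.comp hm)
    rw [← ih _ hg, ← ih f hf]
    refine lintegral_congr fun b => ?_
    have hVe : ∀ z₁, V (j + 1) (resample (V j b) b z₁) = V (j + 1) b := fun z₁ =>
      hV.adapted j b _ (starProjection_resample _ _ _)
    have h2 : ∀ z₁ z, resample (V (j + 1) (resample (V j b) b z₁)) (resample (V j b) b z₁) z
        = resample (V j b) b ((V (j + 1) b).starProjection z₁ +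
          (z - (V (j + 1) b).starProjection z)) := by
      intro z₁ z
      rw [hVe]
      have hself : ∀ x, (V (j + 1) b).starProjection ((V j b).starProjection x)
          = (V j b).starProjection x := fun x =>
        Submodule.starProjection_eq_self_iff.2
          (hV.mono j b (Submodule.starProjection_apply_mem _ x))
      simp only [resample, map_add, map_sub, hself, starProjection_comp_of_le (hV.mono j b)]
      abel
    simp only [h2]
    exact lintegral_resample_fixed (V (j + 1) b) (fun z => f (resample (V j b) b z))
      (hf.comp (by unfold resample; fun_prop))

/-- The likelihood ratio, at the visible component of `b` in `W`, of the Gaussian measure shifted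
by `w` with respect to the centred one. -/
def lr (W : Submodule ℝ E) (w b : E) : ℝ :=
  Real.exp (inner ℝ (W.starProjection w) b - ‖W.starProjection w‖ ^ 2 / 2)

lemma measurable_lr (hV : AdaptiveFlag V) (j : ℕ) (w : E) :
    Measurable fun b => lr (V j b) w b := by
  have h := hV.measurable_proj j w
  exact Real.measurable_exp.comp ((h.inner measurable_id).sub ((h.norm.pow_const 2).div_const 2))

/-- Cameron–Martin formula for functions `F` of the adaptively visible component: averaging the
full density over the hidden component leaves `lr`. -/
lemma lintegral_shift (hV : AdaptiveFlag V) (j : ℕ) (w : E) (F : E → ℝ≥0∞) (hF : Measurable F)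
    (hinv : ∀ b z, F (resample (V j b) b z) = F b) :
    ∫⁻ b, F (b + w) ∂(ProbabilityTheory.stdGaussian E)
      = ∫⁻ b, F b * ENNReal.ofReal (lr (V j b) w b) ∂(ProbabilityTheory.stdGaussian E) := by
  rw [lintegral_cameronMartin w F hF, ← hV.lintegral_resample j _ (by fun_prop)]
  refine lintegral_congr fun b => ?_
  set W := V j b
  have e1 : ∀ z, F (resample W b z) *
      ENNReal.ofReal (Real.exp (inner ℝ w (resample W b z) - ‖w‖ ^ 2 / 2)) =
      F b * ENNReal.ofReal (lr W w b) * ENNReal.ofReal (Real.exp (-‖w - W.starProjection w‖ ^ 2 / 2))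
        * ENNReal.ofReal (Real.exp (inner ℝ (w - W.starProjection w) z)) := by
    intro z
    rw [hinv, mul_assoc, mul_assoc, lr, ← ENNReal.ofReal_mul (Real.exp_pos _).le,
      ← ENNReal.ofReal_mul (Real.exp_pos _).le, ← Real.exp_add, ← Real.exp_add]
    congr 3
    have : ‖w‖ ^ 2 = ‖W.starProjection w‖ ^ 2 + ‖w - W.starProjection w‖ ^ 2 := by
      rw [Submodule.norm_sq_eq_add_norm_sq_starProjection w W,
        Submodule.starProjection_orthogonal_val]
    rw [this, resample, inner_add_right, inner_sub_right, inner_sub_left,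
      Submodule.inner_starProjection_left_eq_right, Submodule.inner_starProjection_left_eq_right]
    ring
  simp only [e1]
  rw [lintegral_const_mul _ (by fun_prop), lintegral_exp_inner_gaussian, mul_assoc,
    ← ENNReal.ofReal_mul (Real.exp_pos _).le, ← Real.exp_add]
  simp [neg_div]

/-- One round of the potential argument. The event is transferred to the unshifted measure on the
set where the likelihood ratio is at most `exp x`. On the rest, while the visible part of `w` has
squared norm at most `τ`, the ratio for `w` is at most `exp (τ - x)` times that for `2 w`, which
integrates to `1`. -/
lemma measure_step_le (hV : AdaptiveFlag V) (j : ℕ) (w : E) (τ τ' x : ℝ) :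
    (ProbabilityTheory.stdGaussian E) {b | ‖(V j (b + w)).starProjection w‖ ^ 2 ≤ τ ∧
        τ' < ‖(V (j + 1) (b + w)).starProjection w‖ ^ 2}
      ≤ ENNReal.ofReal (Real.exp x) * (ProbabilityTheory.stdGaussian E)
          {b | τ' < ‖(V (j + 1) b).starProjection w‖ ^ 2}
        + ENNReal.ofReal (Real.exp (τ - x)) := by
  set γ := ProbabilityTheory.stdGaussian E
  have hm : ∀ i, Measurable fun b => ‖(V i b).starProjection w‖ ^ 2 := fun i =>
    (hV.measurable_proj i w).norm.pow_const 2
  set S : Set E := {b | ‖(V j b).starProjection w‖ ^ 2 ≤ τ ∧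
        τ' < ‖(V (j + 1) b).starProjection w‖ ^ 2} with hS
  set S' : Set E := {b | τ' < ‖(V (j + 1) b).starProjection w‖ ^ 2} with hS'
  have hSm : MeasurableSet S :=
    (measurableSet_le (hm j) measurable_const).inter (measurableSet_lt measurable_const (hm (j+1)))
  have hS'm : MeasurableSet S' := measurableSet_lt measurable_const (hm (j+1))
  have hshift : γ {b | ‖(V j (b + w)).starProjection w‖ ^ 2 ≤ τ ∧
        τ' < ‖(V (j + 1) (b + w)).starProjection w‖ ^ 2} = ∫⁻ b, S.indicator 1 (b + w) ∂γ := by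
    have h1 : Measurable fun b : E => b + w := by fun_prop
    have : (fun b => S.indicator (1 : E → ℝ≥0∞) (b + w)) = ((fun b => b + w) ⁻¹' S).indicator 1 := by
      ext b; simp [Set.indicator]
    rw [this, lintegral_indicator_one (h1 hSm)]
    rfl
  have htot : ∫⁻ b, ENNReal.ofReal (lr (V j b) ((2 : ℝ) • w) b) ∂γ = 1 := by
    have := hV.lintegral_shift j ((2 : ℝ) • w) (fun _ => 1) measurable_const (fun _ _ => rfl)
    simpa using this.symm
  rw [hshift, hV.lintegral_shift j w _ (measurable_one.indicator hSm)]
  · calc ∫⁻ b, S.indicator 1 b * ENNReal.ofReal (lr (V j b) w b) ∂γ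
        ≤ ∫⁻ b, (ENNReal.ofReal (Real.exp x) * S'.indicator 1 b + ENNReal.ofReal (Real.exp (τ - x)) *
            ENNReal.ofReal (lr (V j b) ((2 : ℝ) • w) b)) ∂γ := by
          refine lintegral_mono fun b => ?_
          by_cases hb : b ∈ S
          · have hb' : b ∈ S' := hb.2
            simp only [Set.indicator_of_mem hb, Set.indicator_of_mem hb', Pi.one_apply, one_mul,
              mul_one]
            unfold lr
            rw [← ENNReal.ofReal_mul (Real.exp_pos _).le, ← ENNReal.ofReal_add (Real.exp_pos _).le
              (mul_nonneg (Real.exp_pos _).le (Real.exp_pos _).le)]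
            apply ENNReal.ofReal_le_ofReal
            simp only [map_smul, real_inner_smul_left, norm_smul]
            set p := inner ℝ ((V j b).starProjection w) b
            have hq : ‖(V j b).starProjection w‖ ^ 2 ≤ τ := hb.1
            rw [← Real.exp_add, mul_pow]
            norm_num only [Real.norm_ofNat]
            rcases le_total (p - ‖(V j b).starProjection w‖ ^ 2 / 2) x with h | h
            · have := Real.exp_le_exp.2 h
              have := Real.exp_pos (τ - x + (2 * p - 4 * ‖(V j b).starProjection w‖ ^ 2 / 2))
              linarith
            · have : p - ‖(V j b).starProjection w‖ ^ 2 / 2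
                ≤ τ - x + (2 * p - 4 * ‖(V j b).starProjection w‖ ^ 2 / 2) := by linarith
              have := Real.exp_le_exp.2 this
              have := Real.exp_pos x
              linarith
          · simp [Set.indicator_of_notMem hb]
      _ = _ := by
          rw [lintegral_add_left ((measurable_one.indicator hS'm).const_mul _), lintegral_const_mul _
            (measurable_one.indicator hS'm), lintegral_indicator_one hS'm,
            lintegral_const_mul _ (hV.measurable_lr j _).ennreal_ofReal, htot, mul_one]
  · intro b z
    have h1 := starProjection_resample (V j b) b z
    have h2 := hV.adapted j b _ h1
    have h3 := hV.eq_of_visible j h1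
    have : resample (V j b) b z ∈ S ↔ b ∈ S := by
      simp only [hS, Set.mem_ofPred_eq, h2, h3]
    by_cases hb : b ∈ S
    · rw [Set.indicator_of_mem hb, Set.indicator_of_mem (this.2 hb)]; rfl
    · rw [Set.indicator_of_notMem hb, Set.indicator_of_notMem (this.not.2 hb)]

end AdaptiveFlag
end Flag

/-! ### Exponential moments of sign vectors -/

section Chaos

lemma lintegral_exp_sq_gaussianReal {l : ℝ} (h0 : 0 ≤ l) (h1 : l ≤ 1 / 2) :
    ∫⁻ x, ENNReal.ofReal (Real.exp (l * x ^ 2 / 2)) ∂(gaussianReal 0 1)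
      ≤ ENNReal.ofReal (Real.exp l) := by
  rw [gaussianReal_of_var_ne_zero _ one_ne_zero,
    lintegral_withDensity_eq_lintegral_mul _ (measurable_gaussianPDF _ _) (by fun_prop)]
  have e1 : ∀ x : ℝ, (gaussianPDF 0 1 * fun x => ENNReal.ofReal (Real.exp (l * x ^ 2 / 2))) x
      = ENNReal.ofReal ((√(2 * Real.pi))⁻¹ * Real.exp (-((1 - l) / 2) * x ^ 2)) := by
    intro x
    simp only [Pi.mul_apply, gaussianPDF, gaussianPDFReal]
    rw [← ENNReal.ofReal_mul (by positivity), mul_assoc, ← Real.exp_add]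
    congr 3
    · simp
    · push_cast; ring
  simp only [e1]
  rw [← ofReal_integral_eq_lintegral_ofReal
    ((integrable_exp_neg_mul_sq (by linarith)).const_mul _) (ae_of_all _ fun x => by positivity)]
  apply ENNReal.ofReal_le_ofReal
  rw [integral_const_mul, integral_gaussian, ← Real.sqrt_inv, ← Real.sqrt_mul (by positivity)]
  have h2 : (2 * Real.pi)⁻¹ * (Real.pi / ((1 - l) / 2)) = 1 / (1 - l) := by
    have := Real.pi_pos
    have : 1 - l ≠ 0 := by linarith
    field_simp
  rw [h2, Real.sqrt_le_left (Real.exp_pos _).le, div_le_iff₀ (by linarith), ← Real.exp_nat_mul]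
  have := Real.add_one_le_exp ((2 : ℕ) * l)
  push_cast at this ⊢
  nlinarith

lemma lintegral_exp_quadratic_gaussian {E : Type*} [NormedAddCommGroup E] [InnerProductSpace ℝ E]
    [FiniteDimensional ℝ E] [MeasurableSpace E] [BorelSpace E] {ι : Type*} [Fintype ι]
    (p : OrthonormalBasis ι ℝ E) (l : ι → ℝ) (h0 : ∀ i, 0 ≤ l i) (h1 : ∀ i, l i ≤ 1 / 2) :
    ∫⁻ x, ENNReal.ofReal (Real.exp ((∑ i, l i * inner ℝ (p i) x ^ 2) / 2))
      ∂(ProbabilityTheory.stdGaussian E) ≤ ENNReal.ofReal (Real.exp (∑ i, l i)) := by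
  rw [stdGaussian_eq_map_pi_orthonormalBasis p, lintegral_map (by fun_prop) (by fun_prop)]
  have e1 : ∀ x : ι → ℝ, ENNReal.ofReal (Real.exp ((∑ i, l i *
      inner ℝ (p i) (∑ k, x k • p k) ^ 2) / 2))
      = ∏ i, ENNReal.ofReal (Real.exp (l i * x i ^ 2 / 2)) := by
    intro x
    rw [← ENNReal.ofReal_prod_of_nonneg (fun i _ => (Real.exp_pos _).le), ← Real.exp_sum,
      Finset.sum_div]
    congr 3
    ext i
    have := p.orthonormal.inner_right_fintype x i
    rw [this]
  simp only [e1]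
  have h2 := iIndepFun_pi (μ := fun _ : ι => gaussianReal 0 1)
    (X := fun i x => ENNReal.ofReal (Real.exp (l i * x ^ 2 / 2))) (fun i => by fun_prop)
  have h3 := lintegral_prod_eq_prod_lintegral_of_indepFun Finset.univ
    (fun i (x : ι → ℝ) => ENNReal.ofReal (Real.exp (l i * x i ^ 2 / 2))) h2 (fun i => by fun_prop)
  rw [h3, Real.exp_sum, ENNReal.ofReal_prod_of_nonneg (fun i _ => (Real.exp_pos _).le)]
  refine Finset.prod_le_prod' fun i _ => ?_
  have h4 := (measurePreserving_eval (fun _ : ι => gaussianReal 0 1) i).lintegral_comp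
    (f := fun x => ENNReal.ofReal (Real.exp (l i * x ^ 2 / 2))) (by fun_prop)
  exact h4.trans_le (lintegral_exp_sq_gaussianReal (h0 i) (h1 i))

/-- The vector of signs `±1` encoded by `ε`. -/
def signVec {s : ℕ} (ε : Fin s → Bool) : EuclideanSpace ℝ (Fin s) :=
  WithLp.toLp 2 fun i => if ε i then 1 else -1

lemma norm_signVec_sq {s : ℕ} (ε : Fin s → Bool) : ‖signVec ε‖ ^ 2 = s := by
  rw [EuclideanSpace.real_norm_sq_eq]
  have : ∀ i, (signVec ε) i ^ 2 = 1 := fun i => by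
    simp only [signVec]; split_ifs <;> norm_num
  simp [this]

lemma sum_exp_inner_signVec {s : ℕ} (c : EuclideanSpace ℝ (Fin s)) :
    ∑ ε : Fin s → Bool, Real.exp (inner ℝ c (signVec ε)) ≤ 2 ^ s * Real.exp (‖c‖ ^ 2 / 2) := by
  have e1 : ∀ ε : Fin s → Bool, Real.exp (inner ℝ c (signVec ε))
      = ∏ i, Real.exp ((if ε i then 1 else -1) * c i) := by
    intro ε
    rw [← Real.exp_sum, PiLp.inner_apply]
    simp [signVec]
  simp only [e1]
  have h := Finset.prod_univ_sum (fun _ : Fin s => (Finset.univ : Finset Bool))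
    (fun i e => Real.exp ((if e then 1 else -1) * c i))
  rw [Fintype.piFinset_univ] at h
  rw [← h, EuclideanSpace.real_norm_sq_eq, Finset.sum_div, Real.exp_sum]
  have : (2 : ℝ) ^ s = ∏ _i : Fin s, 2 := by simp
  rw [this, ← Finset.prod_mul_distrib]
  refine Finset.prod_le_prod (fun i _ => by positivity) fun i _ => ?_
  have := Real.cosh_le_exp_half_sq (c i)
  rw [Real.cosh_eq] at this
  simp
  linarith

/-- Exponential moment of a quadratic form of independent signs, by Gaussian linearisation
`exp (‖y‖² / 2) = ∫ exp ⟪y, g⟫` and `cosh c ≤ exp (c² / 2)`. -/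
lemma sum_exp_norm_sq_signVec {s : ℕ} {F : Type*} [NormedAddCommGroup F] [InnerProductSpace ℝ F]
    [FiniteDimensional ℝ F] (T : EuclideanSpace ℝ (Fin s) →ₗ[ℝ] F)
    (hT : ∀ x, ‖T x‖ ^ 2 ≤ 1 / 2 * ‖x‖ ^ 2) :
    ∑ ε : Fin s → Bool, Real.exp (‖T (signVec ε)‖ ^ 2 / 2)
      ≤ 2 ^ s * Real.exp (∑ i, ‖T (EuclideanSpace.single i 1)‖ ^ 2) := by
  set A := LinearMap.adjoint T ∘ₗ T with hA
  have hin : ∀ x y, inner ℝ x (A y) = inner ℝ (T x) (T y) := fun x y => by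
    rw [hA, LinearMap.comp_apply, LinearMap.adjoint_inner_right]
  have hsym : A.IsSymmetric := fun x y => by
    rw [hin, real_inner_comm, hin, real_inner_comm]
  have hfr : Module.finrank ℝ (EuclideanSpace ℝ (Fin s)) = s := by simp
  set p := hsym.eigenvectorBasis hfr
  set l : Fin s → ℝ := fun i => ‖T (p i)‖ ^ 2 with hl
  have hAp : ∀ i, A (p i) = l i • p i := by
    intro i
    have h := hsym.apply_eigenvectorBasis hfr i
    have h2 := hin (p i) (p i)
    rw [h, inner_smul_right, real_inner_self_eq_norm_sq, real_inner_self_eq_norm_sq,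
      p.orthonormal.1 i] at h2
    rw [h]
    congr 1
    simpa using h2
  have hl0 : ∀ i, 0 ≤ l i := fun i => by positivity
  have hl1 : ∀ i, l i ≤ 1 / 2 := fun i => by
    have := hT (p i)
    rwa [p.orthonormal.1 i, one_pow, mul_one] at this
  have htr : ∑ i, l i = ∑ i, ‖T (EuclideanSpace.single i 1)‖ ^ 2 := by
    have h1 := LinearMap.trace_eq_sum_inner A p
    have h2 := LinearMap.trace_eq_sum_inner A (EuclideanSpace.basisFun (Fin s) ℝ)
    simp only [hin, real_inner_self_eq_norm_sq, EuclideanSpace.basisFun_apply] at h1 h2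
    rw [← h2, h1]
  have hTx : ∀ x, ‖T x‖ ^ 2 = ∑ i, l i * inner ℝ (p i) x ^ 2 := by
    intro x
    rw [← real_inner_self_eq_norm_sq, ← hin, ← p.sum_inner_mul_inner]
    refine Finset.sum_congr rfl fun i _ => ?_
    rw [← hsym, hAp, real_inner_smul_left, real_inner_comm x]
    ring
  -- `R` is the square root of `A`
  set R : EuclideanSpace ℝ (Fin s) → EuclideanSpace ℝ (Fin s) := fun x =>
    ∑ i, (√(l i) * inner ℝ (p i) x) • p i with hR
  have hRn : ∀ x, ‖R x‖ ^ 2 = ∑ i, l i * inner ℝ (p i) x ^ 2 := by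
    intro x
    rw [← p.sum_sq_norm_inner_right]
    refine Finset.sum_congr rfl fun i _ => ?_
    rw [hR, p.orthonormal.inner_right_fintype, Real.norm_eq_abs, sq_abs, mul_pow,
      Real.sq_sqrt (hl0 i)]
  have hRs : ∀ x y, inner ℝ (R x) y = inner ℝ (R y) x := by
    intro x y
    simp only [hR, sum_inner, real_inner_smul_left]
    exact Finset.sum_congr rfl fun i _ => by ring
  have hRm : Measurable R := by
    simp only [hR]; fun_prop
  have key : ENNReal.ofReal (∑ ε : Fin s → Bool, Real.exp (‖T (signVec ε)‖ ^ 2 / 2))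
      ≤ ENNReal.ofReal (2 ^ s * Real.exp (∑ i, l i)) := by
    calc ENNReal.ofReal (∑ ε : Fin s → Bool, Real.exp (‖T (signVec ε)‖ ^ 2 / 2))
        = ∑ ε : Fin s → Bool, ∫⁻ x, ENNReal.ofReal (Real.exp (inner ℝ (R (signVec ε)) x))
            ∂(ProbabilityTheory.stdGaussian _) := by
          rw [ENNReal.ofReal_sum_of_nonneg (fun _ _ => (Real.exp_pos _).le)]
          refine Finset.sum_congr rfl fun ε _ => ?_
          rw [lintegral_exp_inner_gaussian, hRn, hTx]
      _ = ∫⁻ x, ENNReal.ofReal (∑ ε : Fin s → Bool, Real.exp (inner ℝ (R x) (signVec ε)))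
            ∂(ProbabilityTheory.stdGaussian _) := by
          rw [← lintegral_finsetSum _ (fun i _ => by fun_prop)]
          refine lintegral_congr fun x => ?_
          rw [ENNReal.ofReal_sum_of_nonneg (fun _ _ => (Real.exp_pos _).le)]
          simp only [hRs x]
      _ ≤ ∫⁻ x, ENNReal.ofReal (2 ^ s) * ENNReal.ofReal
            (Real.exp ((∑ i, l i * inner ℝ (p i) x ^ 2) / 2))
            ∂(ProbabilityTheory.stdGaussian _) := by
          refine lintegral_mono fun x => ?_
          rw [← ENNReal.ofReal_mul (by positivity), ← hRn]
          exact ENNReal.ofReal_le_ofReal (sum_exp_inner_signVec (R x))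
      _ ≤ _ := by
          rw [lintegral_const_mul _ (by fun_prop), ENNReal.ofReal_mul (by positivity)]
          gcongr
          exact lintegral_exp_quadratic_gaussian p l hl0 hl1
  rw [← htr]
  exact (ENNReal.ofReal_le_ofReal_iff (by positivity)).1 key
end Chaos

/-! ### The planted spike -/

section Spike
variable {s : ℕ}

/-- The outer product `u vᵀ` as a bilinear map into vectorised `s × s` matrices. -/
def outerLin (s : ℕ) : EuclideanSpace ℝ (Fin s) →ₗ[ℝ] EuclideanSpace ℝ (Fin s) →ₗ[ℝ]
    EuclideanSpace ℝ (Fin s × Fin s) :=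
  LinearMap.mk₂ ℝ (fun u v => WithLp.toLp 2 fun p => u p.1 * v p.2)
    (fun u u' v => by ext p; simp [add_mul]) (fun c u v => by ext p; simp [mul_assoc])
    (fun u v v' => by ext p; simp [mul_add]) (fun c u v => by ext p; simp; ring)

lemma outerLin_apply (u v : EuclideanSpace ℝ (Fin s)) (p : Fin s × Fin s) :
    outerLin s u v p = u p.1 * v p.2 := rfl

lemma norm_outerLin_sq (u v : EuclideanSpace ℝ (Fin s)) :
    ‖outerLin s u v‖ ^ 2 = ‖u‖ ^ 2 * ‖v‖ ^ 2 := by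
  simp only [EuclideanSpace.real_norm_sq_eq, outerLin_apply, mul_pow, Fintype.sum_prod_type]
  rw [Finset.sum_mul_sum]

lemma norm_starProjection_sq_le {E : Type*} [NormedAddCommGroup E] [InnerProductSpace ℝ E]
    [FiniteDimensional ℝ E] (W : Submodule ℝ E) (x : E) : ‖W.starProjection x‖ ^ 2 ≤ ‖x‖ ^ 2 := by
  have := Submodule.norm_sq_eq_add_norm_sq_starProjection x W
  nlinarith [sq_nonneg ‖Wᗮ.starProjection x‖]

/-- The trace of an orthogonal projection is its rank. -/
lemma sum_norm_starProjection_single (W : Submodule ℝ (EuclideanSpace ℝ (Fin s × Fin s))) :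
    ∑ j, ∑ i, ‖W.starProjection (outerLin s (EuclideanSpace.single i 1)
      (EuclideanSpace.single j 1))‖ ^ 2 = Module.finrank ℝ W := by
  have h1 : (W.starProjection : _ →ₗ[ℝ] EuclideanSpace ℝ (Fin s × Fin s)).trace ℝ _
      = Module.finrank ℝ W := by
    apply LinearMap.IsProj.trace (p := W)
    exact ⟨fun x => Submodule.starProjection_apply_mem W x,
      fun x hx => Submodule.starProjection_eq_self_iff.2 hx⟩
  rw [← h1, LinearMap.trace_eq_sum_inner _ (EuclideanSpace.basisFun (Fin s × Fin s) ℝ),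
    Fintype.sum_prod_type, Finset.sum_comm]
  refine Finset.sum_congr rfl fun i _ => Finset.sum_congr rfl fun j _ => ?_
  have h2 : outerLin s (EuclideanSpace.single i 1) (EuclideanSpace.single j 1)
      = EuclideanSpace.single (i, j) 1 := by
    ext p
    simp only [outerLin_apply, EuclideanSpace.single]
    rcases p with ⟨a, b⟩
    by_cases ha : a = i <;> by_cases hb : b = j <;> simp [ha, hb]
  rw [h2, EuclideanSpace.basisFun_apply]
  simp only [ContinuousLinearMap.coe_coe]
  have h3 := Submodule.inner_starProjection_left_eq_right W
    (W.starProjection (EuclideanSpace.single (i, j) 1)) (EuclideanSpace.single (i, j) 1)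
  rw [Submodule.starProjection_eq_self_iff.2 (Submodule.starProjection_apply_mem W _)] at h3
  rw [real_inner_comm, h3, real_inner_self_eq_norm_sq]

/-- The moment bound for quadratic forms of signs, applied first in `u` for fixed `v` and then
in `v`. -/
lemma sum_exp_starProjection_outer (hs : 0 < s)
    (W : Submodule ℝ (EuclideanSpace ℝ (Fin s × Fin s))) :
    ∑ δ : Fin s → Bool, ∑ ε : Fin s → Bool,
      Real.exp (‖W.starProjection (outerLin s (signVec ε) (signVec δ))‖ ^ 2 / (8 * s))
      ≤ 2 ^ s * (2 ^ s * Real.exp (Module.finrank ℝ W / (2 * s))) := by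
  have hs' : (0 : ℝ) < s := by exact_mod_cast hs
  have step1 : ∀ δ : Fin s → Bool, ∑ ε : Fin s → Bool,
      Real.exp (‖W.starProjection (outerLin s (signVec ε) (signVec δ))‖ ^ 2 / (8 * s))
      ≤ 2 ^ s * Real.exp ((∑ i, ‖W.starProjection (outerLin s (EuclideanSpace.single i 1)
          (signVec δ))‖ ^ 2) / (4 * s)) := by
    intro δ
    set T : EuclideanSpace ℝ (Fin s) →ₗ[ℝ] EuclideanSpace ℝ (Fin s × Fin s) :=
      √(1 / (4 * s)) • ((W.starProjection : _ →ₗ[ℝ] EuclideanSpace ℝ (Fin s × Fin s)) ∘ₗ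
        (outerLin s).flip (signVec δ)) with hT
    have hTn : ∀ x, ‖T x‖ ^ 2 = 1 / (4 * s) * ‖W.starProjection (outerLin s x (signVec δ))‖ ^ 2 := by
      intro x
      have : T x = √(1 / (4 * s)) • W.starProjection (outerLin s x (signVec δ)) := rfl
      rw [this, norm_smul, mul_pow, Real.norm_eq_abs, sq_abs, Real.sq_sqrt (by positivity)]
    have h := sum_exp_norm_sq_signVec T (fun x => by
      rw [hTn]
      have h1 := norm_starProjection_sq_le W (outerLin s x (signVec δ))
      rw [norm_outerLin_sq, norm_signVec_sq] at h1
      calc 1 / (4 * (s : ℝ)) * ‖W.starProjection (outerLin s x (signVec δ))‖ ^ 2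
          ≤ 1 / (4 * s) * (‖x‖ ^ 2 * s) := by gcongr
        _ = 1 / 4 * ‖x‖ ^ 2 := by field_simp
        _ ≤ 1 / 2 * ‖x‖ ^ 2 := by nlinarith [sq_nonneg ‖x‖])
    simp only [hTn, ← Finset.mul_sum] at h
    refine le_of_eq_of_le (Finset.sum_congr rfl fun ε _ => ?_) (h.trans_eq ?_)
    · congr 1; ring
    · congr 2; ring
  set T : EuclideanSpace ℝ (Fin s) →ₗ[ℝ] PiLp 2 (fun _ : Fin s => EuclideanSpace ℝ (Fin s × Fin s)) :=
    { toFun := fun v => WithLp.toLp 2 fun i =>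
        √(1 / (2 * s)) • W.starProjection (outerLin s (EuclideanSpace.single i 1) v)
      map_add' := fun x y => by
        ext i : 1
        change √(1 / (2 * s)) • W.starProjection (outerLin s (EuclideanSpace.single i 1) (x + y)) =
          √(1 / (2 * s)) • W.starProjection (outerLin s (EuclideanSpace.single i 1) x) +
          √(1 / (2 * s)) • W.starProjection (outerLin s (EuclideanSpace.single i 1) y)
        rw [map_add, map_add, smul_add]
      map_smul' := fun c x => by
        ext i : 1
        change √(1 / (2 * s)) • W.starProjection (outerLin s (EuclideanSpace.single i 1) (c • x)) =
          c • √(1 / (2 * s)) • W.starProjection (outerLin s (EuclideanSpace.single i 1) x)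
        rw [map_smul, map_smul, smul_comm] } with hT
  have hTn : ∀ x, ‖T x‖ ^ 2 = 1 / (2 * s) *
      ∑ i, ‖W.starProjection (outerLin s (EuclideanSpace.single i 1) x)‖ ^ 2 := by
    intro x
    rw [PiLp.norm_sq_eq_of_L2, Finset.mul_sum]
    refine Finset.sum_congr rfl fun i _ => ?_
    have : T x i = √(1 / (2 * s)) • W.starProjection (outerLin s (EuclideanSpace.single i 1) x) := rfl
    rw [this, norm_smul, mul_pow, Real.norm_eq_abs, sq_abs, Real.sq_sqrt (by positivity)]
  have h := sum_exp_norm_sq_signVec T (fun x => by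
      rw [hTn]
      calc 1 / (2 * (s : ℝ)) * ∑ i, ‖W.starProjection (outerLin s (EuclideanSpace.single i 1) x)‖ ^ 2
          ≤ 1 / (2 * s) * ∑ i : Fin s, ‖x‖ ^ 2 := by
            refine mul_le_mul_of_nonneg_left (Finset.sum_le_sum fun i _ => ?_) (by positivity)
            have h1 := norm_starProjection_sq_le W (outerLin s (EuclideanSpace.single i 1) x)
            rw [norm_outerLin_sq] at h1
            simpa using h1
        _ = 1 / 2 * ‖x‖ ^ 2 := by simp; field_simp)
  simp only [hTn] at h
  rw [← Finset.mul_sum, sum_norm_starProjection_single] at h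
  calc _ ≤ ∑ δ : Fin s → Bool, 2 ^ s * Real.exp ((∑ i, ‖W.starProjection (outerLin s
          (EuclideanSpace.single i 1) (signVec δ))‖ ^ 2) / (4 * s)) :=
        Finset.sum_le_sum fun δ _ => step1 δ
    _ ≤ _ := by
      rw [← Finset.mul_sum]
      gcongr
      refine le_of_eq_of_le (Finset.sum_congr rfl fun ε _ => ?_) (h.trans_eq ?_)
      · congr 1; ring
      · congr 2; ring

/-- The planted rank-one matrix `(100 / √s) u vᵀ` with sign vectors `u, v` encoded by `e`. -/
def spike (s : ℕ) (e : (Fin s → Bool) × (Fin s → Bool)) : EuclideanSpace ℝ (Fin s × Fin s) :=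
  (100 / √s) • outerLin s (signVec e.1) (signVec e.2)

lemma norm_spike_sq (hs : 0 < s) (e : (Fin s → Bool) × (Fin s → Bool)) :
    ‖spike s e‖ ^ 2 = 10000 * s := by
  have hs' : (0 : ℝ) < s := by exact_mod_cast hs
  rw [spike, norm_smul, mul_pow, norm_outerLin_sq, norm_signVec_sq, norm_signVec_sq,
    Real.norm_eq_abs, sq_abs, div_pow, Real.sq_sqrt hs'.le]
  field_simp
  norm_num

/-- A fixed subspace of small dimension captures more than `τ` from few spikes only. -/
lemma card_spike_le (hs : 0 < s) (W : Submodule ℝ (EuclideanSpace ℝ (Fin s × Fin s))) (τ : ℝ) :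
    ((Finset.univ.filter fun e => τ < ‖W.starProjection (spike s e)‖ ^ 2).card : ℝ)
      ≤ 4 ^ s * Real.exp (Module.finrank ℝ W / (2 * s) - τ / 80000) := by
  have hs' : (0 : ℝ) < s := by exact_mod_cast hs
  have h := sum_exp_starProjection_outer hs W
  rw [Finset.sum_comm, ← Fintype.sum_prod_type' (f := fun ε δ =>
    Real.exp (‖W.starProjection (outerLin s (signVec ε) (signVec δ))‖ ^ 2 / (8 * s)))] at h
  have h1 : ((Finset.univ.filter fun e => τ < ‖W.starProjection (spike s e)‖ ^ 2).card : ℝ)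
      * Real.exp (τ / 80000) ≤ ∑ x : (Fin s → Bool) × (Fin s → Bool),
        Real.exp (‖W.starProjection (outerLin s (signVec x.1) (signVec x.2))‖ ^ 2 / (8 * s)) := by
    rw [← nsmul_eq_mul, ← Finset.sum_const]
    refine (Finset.sum_le_sum fun e he => ?_).trans (Finset.sum_le_sum_of_subset_of_nonneg
      (Finset.filter_subset _ _) fun _ _ _ => (Real.exp_pos _).le)
    rw [Real.exp_le_exp]
    have h2 := (Finset.mem_filter.1 he).2
    rw [spike, map_smul, norm_smul, mul_pow, Real.norm_eq_abs, sq_abs, div_pow,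
      Real.sq_sqrt hs'.le] at h2
    calc τ / 80000 ≤ 100 ^ 2 / s * ‖W.starProjection (outerLin s (signVec e.1) (signVec e.2))‖ ^ 2
          / 80000 := by gcongr
      _ = _ := by field_simp; ring
  rw [Real.exp_sub, ← mul_div_assoc, le_div_iff₀ (Real.exp_pos _)]
  refine (h1.trans h).trans_eq ?_
  rw [← mul_assoc, ← mul_pow]; norm_num

/-- The threshold for the squared projection of the spike onto the space of the first `j` rounds. -/
def thr (κ : ℝ) (j : ℕ) : ℝ := 4 * κ * 320000 ^ j

/-- Summed over all spikes, the probability that the threshold of round `T` is exceeded. A spike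
above the threshold after `j + 1` rounds either was so already after `j` rounds, or crossed it in
this round; the latter is bounded by `measure_step_le` with `x = 2 * thr κ j`, where the
unplanted term is estimated by `card_spike_le`. -/
lemma sum_measure_spike_le (hs : 0 < s) {k : ℕ} (hk : s ≤ k)
    {V : ℕ → EuclideanSpace ℝ (Fin s × Fin s) → Submodule ℝ (EuclideanSpace ℝ (Fin s × Fin s))}
    (hV : AdaptiveFlag V) (hrank : ∀ j b, Module.finrank ℝ (V j b) ≤ j * k) (T : ℕ) :
    ∑ e, (ProbabilityTheory.stdGaussian _) {b | thr (k / s) T <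
        ‖(V T (b + spike s e)).starProjection (spike s e)‖ ^ 2}
      ≤ ENNReal.ofReal (4 ^ s * ∑ j ∈ Finset.range T, 2 * Real.exp (- thr (k / s) j)) := by
  have hs' : (0 : ℝ) < s := by exact_mod_cast hs
  set κ : ℝ := k / s with hκ
  have hκ1 : 1 ≤ κ := by
    rw [hκ, le_div_iff₀ hs', one_mul]; exact_mod_cast hk
  set γ := ProbabilityTheory.stdGaussian (EuclideanSpace ℝ (Fin s × Fin s))
  induction T with
  | zero =>
    have : ∀ e b, ¬ thr κ 0 < ‖(V 0 (b + spike s e)).starProjection (spike s e)‖ ^ 2 := by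
      intro e b
      rw [hV.zero]
      simp [thr]; linarith
    simp [this]
  | succ j ih =>
    have hcount : ∑ e, γ {b | thr κ (j + 1) < ‖(V (j + 1) b).starProjection (spike s e)‖ ^ 2}
        ≤ ENNReal.ofReal (4 ^ s * Real.exp (- 3 * thr κ j)) := by
      have hms : ∀ e, MeasurableSet
          {b | thr κ (j + 1) < ‖(V (j + 1) b).starProjection (spike s e)‖ ^ 2} := fun e =>
        measurableSet_lt measurable_const ((hV.measurable_proj (j + 1) _).norm.pow_const 2)
      have e1 : ∀ e, γ {b | thr κ (j + 1) < ‖(V (j + 1) b).starProjection (spike s e)‖ ^ 2}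
          = ∫⁻ b, Set.indicator {b | thr κ (j + 1) <
            ‖(V (j + 1) b).starProjection (spike s e)‖ ^ 2} 1 b ∂γ := fun e =>
        (lintegral_indicator_one (hms e)).symm
      simp only [e1]
      rw [← lintegral_finsetSum _ (fun e _ => measurable_one.indicator (hms e))]
      calc _ ≤ ∫⁻ _b, ENNReal.ofReal (4 ^ s * Real.exp (- 3 * thr κ j)) ∂γ := by
            refine lintegral_mono fun b => ?_
            have h2 : ∑ e, Set.indicator {b | thr κ (j + 1) <
                ‖(V (j + 1) b).starProjection (spike s e)‖ ^ 2} (1 : EuclideanSpace ℝ (Fin s × Fin s) → ℝ≥0∞) b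
                = ENNReal.ofReal ((Finset.univ.filter fun e => thr κ (j + 1) <
                  ‖(V (j + 1) b).starProjection (spike s e)‖ ^ 2).card : ℝ) := by
              simp [Set.indicator_apply, Finset.sum_boole]
            refine h2.trans_le (ENNReal.ofReal_le_ofReal ((card_spike_le hs _ _).trans ?_))
            gcongr
            have h3 : (Module.finrank ℝ (V (j + 1) b) : ℝ) ≤ (j + 1) * k := by
              exact_mod_cast hrank (j + 1) b
            have h4 : (Module.finrank ℝ (V (j + 1) b) : ℝ) / (2 * s) ≤ (j + 1) * κ / 2 := by
              rw [hκ, div_le_iff₀ (by positivity)]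
              refine h3.trans_eq ?_
              field_simp
            have h5 : ((j : ℝ) + 1) ≤ 320000 ^ j := by
              have := one_add_mul_le_pow (a := (319999 : ℝ)) (by norm_num) j
              have hj : (0 : ℝ) ≤ j := by positivity
              norm_num at this
              linarith
            have h6 : thr κ (j + 1) = 320000 * thr κ j := by simp only [thr]; ring
            rw [h6]
            have h7 : (j + 1) * κ ≤ thr κ j := by
              simp only [thr]; nlinarith [pow_pos (show (0 : ℝ) < 320000 by norm_num) j]
            have h8 : 0 ≤ (j + 1) * κ := by positivity
            linarith
        _ = _ := by simp
    calc _ ≤ ∑ e, (γ {b | thr κ j < ‖(V j (b + spike s e)).starProjection (spike s e)‖ ^ 2} +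
          (ENNReal.ofReal (Real.exp (2 * thr κ j)) *
            γ {b | thr κ (j + 1) < ‖(V (j + 1) b).starProjection (spike s e)‖ ^ 2} +
            ENNReal.ofReal (Real.exp (thr κ j - 2 * thr κ j)))) := by
          refine Finset.sum_le_sum fun e _ => ?_
          refine le_trans ?_ (add_le_add_right (hV.measure_step_le j (spike s e) (thr κ j)
            (thr κ (j + 1)) (2 * thr κ j)) _)
          refine (measure_mono ?_).trans (measure_union_le _ _)
          intro b hb
          rcases lt_or_ge (thr κ j) (‖(V j (b + spike s e)).starProjection (spike s e)‖ ^ 2)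
            with h | h
          · exact Or.inl h
          · exact Or.inr ⟨h, hb⟩
      _ ≤ ENNReal.ofReal (4 ^ s * ∑ j ∈ Finset.range j, 2 * Real.exp (- thr κ j)) +
          (ENNReal.ofReal (Real.exp (2 * thr κ j)) *
            ENNReal.ofReal (4 ^ s * Real.exp (- 3 * thr κ j)) +
            ENNReal.ofReal (4 ^ s * Real.exp (- thr κ j))) := by
          rw [Finset.sum_add_distrib, Finset.sum_add_distrib, ← Finset.mul_sum]
          gcongr
          rw [Finset.sum_const, Finset.card_univ, nsmul_eq_mul, ENNReal.ofReal_mul (by positivity)]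
          have h1 : Fintype.card ((Fin s → Bool) × (Fin s → Bool)) = 4 ^ s := by
            simp [← mul_pow]
          rw [h1, show thr κ j - 2 * thr κ j = - thr κ j by ring]
          gcongr
          simp
      _ = _ := by
          have hn : 0 ≤ ∑ j ∈ Finset.range j, 2 * Real.exp (- thr κ j) :=
            Finset.sum_nonneg fun _ _ => by positivity
          rw [← ENNReal.ofReal_mul (by positivity), ← ENNReal.ofReal_add (by positivity)
            (by positivity), ← ENNReal.ofReal_add (by positivity) (by positivity),
            Finset.sum_range_succ]
          congr 1
          rw [mul_left_comm, ← Real.exp_add]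
          ring_nf

lemma sum_exp_thr_le {κ : ℝ} (hκ : 1 ≤ κ) (T : ℕ) :
    ∑ j ∈ Finset.range T, 2 * Real.exp (- thr κ j) ≤ 1 / 4 := by
  have h1 : ∀ j, Real.exp (- thr κ j) ≤ (1 / 16) ^ (j + 1) := by
    intro j
    have h5 : ((j : ℝ) + 1) ≤ 320000 ^ j := by
      have := one_add_mul_le_pow (a := (319999 : ℝ)) (by norm_num) j
      have hj : (0 : ℝ) ≤ j := by positivity
      norm_num at this
      linarith
    have h2 : 4 * ((j : ℝ) + 1) ≤ thr κ j := by
      simp only [thr]; nlinarith [pow_pos (show (0 : ℝ) < 320000 by norm_num) j]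
    have h3 : Real.exp (-4) ≤ 1 / 16 := by
      rw [Real.exp_neg, ← one_div]
      apply one_div_le_one_div_of_le (by norm_num)
      have h4 : (2 : ℝ) ≤ Real.exp 1 := by have := Real.add_one_le_exp (1 : ℝ); linarith
      calc (16 : ℝ) = 2 ^ 4 := by norm_num
        _ ≤ Real.exp 1 ^ 4 := by gcongr
        _ = Real.exp 4 := by rw [← Real.exp_nat_mul]; norm_num
    calc Real.exp (- thr κ j) ≤ Real.exp ((j + 1 : ℕ) * (-4)) := by
          apply Real.exp_le_exp.2; push_cast; linarith
      _ = Real.exp (-4) ^ (j + 1) := by rw [Real.exp_nat_mul]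
      _ ≤ _ := by gcongr
  have h2 : ∀ T : ℕ, ∑ j ∈ Finset.range T, 2 * ((1 : ℝ) / 16) ^ (j + 1)
      = 2 / 15 * (1 - (1 / 16) ^ T) := by
    intro T
    induction T with
    | zero => simp
    | succ T ih => rw [Finset.sum_range_succ, ih]; ring
  calc _ ≤ ∑ j ∈ Finset.range T, 2 * ((1 : ℝ) / 16) ^ (j + 1) :=
        Finset.sum_le_sum fun j _ => by gcongr; exact h1 j
    _ ≤ _ := by
      rw [h2]
      have : (0 : ℝ) ≤ (1 / 16) ^ T := by positivity
      linarith
end Spike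

/-! ### The operator norm of a Gaussian matrix -/

section OpNorm
variable {s : ℕ}

/-- The action `y ↦ b y` of a vectorised `s × s` matrix `b` on `ℝˢ`, as a bilinear map. -/
def act (s : ℕ) : EuclideanSpace ℝ (Fin s × Fin s) →ₗ[ℝ] EuclideanSpace ℝ (Fin s) →ₗ[ℝ]
    EuclideanSpace ℝ (Fin s) :=
  LinearMap.mk₂ ℝ (fun b y => WithLp.toLp 2 fun i => ∑ j, b (i, j) * y j)
    (fun b b' y => by ext i; simp [add_mul, Finset.sum_add_distrib])
    (fun c b y => by ext i; simp [mul_assoc, Finset.mul_sum])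
    (fun b y y' => by ext i; simp [mul_add, Finset.sum_add_distrib])
    (fun c b y => by ext i; simp [Finset.mul_sum, mul_left_comm])

lemma act_apply (b : EuclideanSpace ℝ (Fin s × Fin s)) (y : EuclideanSpace ℝ (Fin s)) (i : Fin s) :
    act s b y i = ∑ j, b (i, j) * y j := rfl

lemma inner_act (b : EuclideanSpace ℝ (Fin s × Fin s)) (x y : EuclideanSpace ℝ (Fin s)) :
    inner ℝ (act s b y) x = inner ℝ (outerLin s x y) b := by
  simp only [PiLp.inner_apply, act_apply, outerLin_apply, Fintype.sum_prod_type]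
  refine Finset.sum_congr rfl fun i _ => ?_
  simp [Finset.mul_sum, mul_left_comm]

@[fun_prop]
lemma continuous_act : Continuous fun p : EuclideanSpace ℝ (Fin s × Fin s) × EuclideanSpace ℝ (Fin s) =>
    act s p.1 p.2 := by
  refine (PiLp.continuous_toLp 2 _).comp (continuous_pi fun i => ?_)
  refine continuous_finsetSum _ fun j _ => ?_
  fun_prop

/-- The exponential moment `∫_{‖y‖ < 2} exp (‖b y‖² / 16) dy`: a smooth substitute for the
maximum of `‖b y‖` over a net of the unit ball. -/
def expMoment (s : ℕ) (b : EuclideanSpace ℝ (Fin s × Fin s)) : ℝ≥0∞ :=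
  ∫⁻ y in Metric.ball (0 : EuclideanSpace ℝ (Fin s)) 2,
    ENNReal.ofReal (Real.exp (‖act s b y‖ ^ 2 / 16))

lemma measurable_integrand :
    Measurable fun p : EuclideanSpace ℝ (Fin s × Fin s) × EuclideanSpace ℝ (Fin s) =>
      ENNReal.ofReal (Real.exp (‖act s p.1 p.2‖ ^ 2 / 16)) := by
  have h := (continuous_act (s := s)).measurable
  fun_prop

lemma measurable_expMoment : Measurable (expMoment s) :=
  Measurable.lintegral_prod_right (measurable_integrand (s := s))

/-- By the linearisation `exp (‖b y‖² / 16) = ∫ exp (⟪x yᵀ, b⟫ / √8)` over a Gaussian `x`, and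
Fubini. -/
lemma lintegral_exp_act_le (y : EuclideanSpace ℝ (Fin s)) (hy : ‖y‖ ≤ 2) :
    ∫⁻ b, ENNReal.ofReal (Real.exp (‖act s b y‖ ^ 2 / 16))
        ∂(ProbabilityTheory.stdGaussian (EuclideanSpace ℝ (Fin s × Fin s)))
      ≤ ENNReal.ofReal (Real.exp (s / 2)) := by
  have h8 : (√8 : ℝ) ^ 2 = 8 := Real.sq_sqrt (by norm_num)
  have e1 : ∀ b : EuclideanSpace ℝ (Fin s × Fin s),
      ENNReal.ofReal (Real.exp (‖act s b y‖ ^ 2 / 16))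
      = ∫⁻ x, ENNReal.ofReal (Real.exp (inner ℝ ((1 / √8 : ℝ) • outerLin s x y) b))
        ∂(ProbabilityTheory.stdGaussian (EuclideanSpace ℝ (Fin s))) := by
    intro b
    have h := lintegral_exp_inner_gaussian ((1 / √8 : ℝ) • act s b y)
    simp only [real_inner_smul_left, inner_act] at h
    simp only [real_inner_smul_left, h]
    congr 2
    rw [norm_smul, mul_pow, Real.norm_eq_abs, sq_abs, div_pow, h8]
    ring
  simp only [e1]
  rw [lintegral_lintegral_swap]
  swap
  · have : Continuous fun p : EuclideanSpace ℝ (Fin s × Fin s) × EuclideanSpace ℝ (Fin s) =>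
        inner ℝ ((1 / √8 : ℝ) • outerLin s p.2 y) p.1 := by
      have h1 : Continuous fun x => outerLin s x y :=
        ((outerLin s).flip y).continuous_of_finiteDimensional
      fun_prop
    exact (ENNReal.measurable_ofReal.comp (Real.measurable_exp.comp this.measurable)).aemeasurable
  simp only [lintegral_exp_inner_gaussian]
  have h2 := lintegral_exp_quadratic_gaussian (EuclideanSpace.basisFun (Fin s) ℝ)
    (fun _ => 1 / 2) (fun _ => by norm_num) (fun _ => le_rfl)
  refine (lintegral_mono fun x => ?_).trans (h2.trans_eq ?_)
  · apply ENNReal.ofReal_le_ofReal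
    apply Real.exp_le_exp.2
    rw [norm_smul, mul_pow, norm_outerLin_sq, Real.norm_eq_abs, sq_abs, div_pow, h8,
      ← Finset.mul_sum]
    have : ∑ i, inner ℝ ((EuclideanSpace.basisFun (Fin s) ℝ) i) x ^ 2 = ‖x‖ ^ 2 := by
      rw [EuclideanSpace.real_norm_sq_eq]
      simp [EuclideanSpace.inner_single_left]
    rw [this]
    have : ‖y‖ ^ 2 ≤ 4 := by nlinarith [norm_nonneg y]
    nlinarith [sq_nonneg ‖x‖]
  · congr 2
    simp
    ring

lemma lintegral_expMoment_le :
    ∫⁻ b, expMoment s b ∂(ProbabilityTheory.stdGaussian (EuclideanSpace ℝ (Fin s × Fin s)))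
      ≤ ENNReal.ofReal (Real.exp (s / 2)) *
        volume (Metric.ball (0 : EuclideanSpace ℝ (Fin s)) 2) := by
  unfold expMoment
  rw [lintegral_lintegral_swap measurable_integrand.aemeasurable]
  calc _ ≤ ∫⁻ y in Metric.ball (0 : EuclideanSpace ℝ (Fin s)) 2,
        ENNReal.ofReal (Real.exp (s / 2)) := by
        refine setLIntegral_mono measurable_const fun y hy => lintegral_exp_act_le y ?_
        simpa using (Metric.mem_ball.1 hy).le
    _ = _ := by simp

/-- If `b` has large operator norm, then `‖b y‖` is large on a whole ball of radius `1 / 4`, by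
the triangle inequality around a near-maximiser. -/
lemma le_expMoment (b : EuclideanSpace ℝ (Fin s × Fin s)) (x₀ : EuclideanSpace ℝ (Fin s))
    (hx : 16 * √s * ‖x₀‖ < ‖act s b x₀‖) :
    ENNReal.ofReal (Real.exp (4 * s)) *
      volume (Metric.ball (0 : EuclideanSpace ℝ (Fin s)) (1 / 4)) ≤ expMoment s b := by
  set L : EuclideanSpace ℝ (Fin s) →L[ℝ] EuclideanSpace ℝ (Fin s) :=
    (act s b).toContinuousLinearMap with hL
  have hLa : ∀ y, L y = act s b y := fun y => rfl
  have hn : 16 * √s < ‖L‖ := by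
    by_contra h
    push Not at h
    have := L.le_opNorm x₀
    rw [hLa] at this
    have := this.trans (mul_le_mul_of_nonneg_right h (norm_nonneg x₀))
    linarith
  have hpos : 0 < ‖L‖ := lt_of_le_of_lt (by positivity) hn
  obtain ⟨x, hx1, hx2⟩ := L.exists_lt_apply_of_lt_opNorm (show 3 / 4 * ‖L‖ < ‖L‖ by linarith)
  have hsub : Metric.ball x (1 / 4) ⊆ Metric.ball (0 : EuclideanSpace ℝ (Fin s)) 2 := by
    apply Metric.ball_subset_ball'
    rw [dist_zero_right]; linarith
  rw [← Measure.addHaar_ball_center volume x, ← setLIntegral_const]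
  refine le_trans (setLIntegral_mono (measurable_integrand.comp
    (measurable_const.prodMk measurable_id)) fun y hy => ?_) (lintegral_mono_set hsub)
  apply ENNReal.ofReal_le_ofReal
  apply Real.exp_le_exp.2
  have h1 : ‖L x‖ ≤ ‖L y‖ + ‖L‖ * (1 / 4) := by
    have h2 : ‖L (x - y)‖ ≤ ‖L‖ * (1 / 4) := by
      refine (L.le_opNorm _).trans ?_
      gcongr
      rw [← dist_eq_norm, dist_comm]
      exact (Metric.mem_ball.1 hy).le
    rw [map_sub] at h2
    have := norm_sub_norm_le (L x) (L y)
    linarith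
  have h3 : 8 * √s ≤ ‖act s b y‖ := by rw [← hLa]; linarith
  have h4 : (8 * √s) ^ 2 ≤ ‖act s b y‖ ^ 2 := by gcongr
  rw [mul_pow, Real.sq_sqrt (by positivity)] at h4
  change 4 * (s : ℝ) ≤ ‖act s b y‖ ^ 2 / 16
  linarith

/-- Gaussian matrices with atypically large operator norm (through the exponential moment). -/
def badSet (s : ℕ) : Set (EuclideanSpace ℝ (Fin s × Fin s)) :=
  {b | ENNReal.ofReal (Real.exp (4 * s)) *
      volume (Metric.ball (0 : EuclideanSpace ℝ (Fin s)) (1 / 4)) ≤ expMoment s b}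

lemma norm_act_le_of_notMem_badSet {b : EuclideanSpace ℝ (Fin s × Fin s)} (hb : b ∉ badSet s)
    (x : EuclideanSpace ℝ (Fin s)) : ‖act s b x‖ ≤ 16 * √s * ‖x‖ := by
  by_contra h
  exact hb (le_expMoment b x (not_le.1 h))

lemma measure_badSet_le :
    ProbabilityTheory.stdGaussian (EuclideanSpace ℝ (Fin s × Fin s)) (badSet s)
      ≤ ENNReal.ofReal (Real.exp (-s)) := by
  set v := volume (Metric.ball (0 : EuclideanSpace ℝ (Fin s)) (1 / 4)) with hv
  have hv0 : v ≠ 0 := (Metric.measure_ball_pos volume _ (by norm_num)).ne'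
  have hvt : v ≠ ∞ := measure_ball_lt_top.ne
  have hvol : volume (Metric.ball (0 : EuclideanSpace ℝ (Fin s)) 2)
      = ENNReal.ofReal (8 ^ s) * v := by
    have := Measure.addHaar_ball_mul_of_pos volume (0 : EuclideanSpace ℝ (Fin s))
      (show (0 : ℝ) < 8 by norm_num) (1 / 4)
    norm_num at this
    rw [this, hv]
    norm_num
  have hm := mul_meas_ge_le_lintegral (μ := ProbabilityTheory.stdGaussian
    (EuclideanSpace ℝ (Fin s × Fin s))) (measurable_expMoment (s := s))
    (ENNReal.ofReal (Real.exp (4 * s)) * v)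
  have h1 := hm.trans lintegral_expMoment_le
  rw [hvol, ← mul_assoc, mul_right_comm, ENNReal.mul_le_mul_iff_left hv0 hvt,
    ← ENNReal.ofReal_mul (by positivity)] at h1
  have h2 : ENNReal.ofReal (Real.exp (4 * s)) ≠ 0 := by simp [Real.exp_pos]
  have h3 := (ENNReal.le_div_iff_mul_le (Or.inl h2) (Or.inl ENNReal.ofReal_ne_top)).2
    (mul_comm _ _ |>.trans_le h1)
  refine h3.trans ?_
  rw [← ENNReal.ofReal_div_of_pos (Real.exp_pos _)]
  apply ENNReal.ofReal_le_ofReal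
  rw [div_le_iff₀ (Real.exp_pos _), ← Real.exp_add]
  have h8 : (8 : ℝ) ≤ Real.exp (5 / 2) := by
    have h5 : (64 : ℝ) ≤ Real.exp (5 / 2) ^ 2 := by
      rw [← Real.exp_nat_mul]
      have : (2.7 : ℝ) ≤ Real.exp 1 := by
        have := Real.exp_one_gt_d9; linarith
      calc (64 : ℝ) ≤ 2.7 ^ 5 := by norm_num
        _ ≤ Real.exp 1 ^ 5 := by gcongr
        _ = _ := by rw [← Real.exp_nat_mul]; norm_num
    nlinarith [Real.exp_pos (5 / 2)]
  calc Real.exp (s / 2) * 8 ^ s ≤ Real.exp (s / 2) * Real.exp (5 / 2) ^ s := by gcongr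
    _ = Real.exp (-s + 4 * s) := by
      rw [← Real.exp_nat_mul, ← Real.exp_add]; congr 1; ring
end OpNorm

/-! ### Measurability of projections onto spans -/

section MeasProj
variable {E : Type*} [NormedAddCommGroup E] [InnerProductSpace ℝ E] [FiniteDimensional ℝ E]

/-- One Gram–Schmidt step. When `v ∈ W` the residual vanishes and the quotient is `0 / 0 = 0`,
so that the formula needs no case distinction. -/
lemma starProjection_span_insert (A : Set E) (v w : E) :
    (Submodule.span ℝ (insert v A)).starProjection w
      = (Submodule.span ℝ A).starProjection w
        + (inner ℝ (v - (Submodule.span ℝ A).starProjection v) w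
            / ‖v - (Submodule.span ℝ A).starProjection v‖ ^ 2)
          • (v - (Submodule.span ℝ A).starProjection v) := by
  set W := Submodule.span ℝ A with hW
  set z := v - W.starProjection v with hz
  set c := inner ℝ z w / ‖z‖ ^ 2 with hc
  have hWs : W ≤ Submodule.span ℝ (insert v A) := Submodule.span_mono (Set.subset_insert _ _)
  have hzW : ∀ y ∈ W, inner ℝ z y = 0 := fun y hy =>
    Submodule.starProjection_inner_eq_zero v y hy
  have hcz : c * inner ℝ z z = inner ℝ z w := by
    rw [real_inner_self_eq_norm_sq]
    by_cases h : z = 0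
    · simp [h]
    · rw [hc]; field_simp [norm_ne_zero_iff.2 h]
  refine Submodule.eq_starProjection_of_mem_of_inner_eq_zero ?_ ?_
  · refine add_mem (hWs (Submodule.starProjection_apply_mem _ _)) (Submodule.smul_mem _ _ ?_)
    exact sub_mem (Submodule.subset_span (Set.mem_insert _ _))
      (hWs (Submodule.starProjection_apply_mem _ _))
  · have key : ∀ y ∈ W, inner ℝ (w - (W.starProjection w + c • z)) y = 0 := by
      intro y hy
      rw [← sub_sub, inner_sub_left, Submodule.starProjection_inner_eq_zero w y hy,
        real_inner_smul_left, hzW y hy]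
      simp
    intro y hy
    induction hy using Submodule.span_induction with
    | mem y hy =>
      rcases hy with rfl | hy
      · have h1 : y = z + W.starProjection y := by rw [hz]; abel
        rw [h1, inner_add_right, key _ (Submodule.starProjection_apply_mem _ _), add_zero,
          inner_sub_left, inner_add_left, real_inner_smul_left, hcz, real_inner_comm z,
          real_inner_comm z (W.starProjection w), hzW _ (Submodule.starProjection_apply_mem _ _)]
        simp
      · exact key y (Submodule.subset_span hy)
    | zero => simp
    | add a b _ _ ha hb => rw [inner_add_right, ha, hb, add_zero]
    | smul a b _ hb => rw [real_inner_smul_right, hb, mul_zero]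

variable [MeasurableSpace E] [BorelSpace E]

lemma measurable_starProjection_span_image {X ι : Type*} [MeasurableSpace X] (S : Finset ι)
    (f : ι → X → E) (hf : ∀ i, Measurable (f i)) :
    Measurable fun p : X × E =>
      (Submodule.span ℝ ((fun i => f i p.1) '' (S : Set ι))).starProjection p.2 := by
  induction S using Finset.induction_on with
  | empty => simp
  | insert a S _ ih =>
    simp only [Finset.coe_insert, Set.image_insert_eq, starProjection_span_insert]
    have h1 : Measurable fun p : X × E => f a p.1 := (hf a).comp measurable_fst
    have h2 : Measurable fun p : X × E =>
        (Submodule.span ℝ ((fun i => f i p.1) '' (S : Set ι))).starProjection (f a p.1) :=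
      ih.comp (measurable_fst.prodMk h1)
    have h3 := h1.sub h2
    exact ih.add (((h3.inner measurable_snd).div (h3.norm.pow_const 2)).smul h3)

lemma measurable_starProjection_span {X ι : Type*} [MeasurableSpace X] [Fintype ι]
    (f : ι → X → E) (hf : ∀ i, Measurable (f i)) :
    Measurable fun p : X × E =>
      (Submodule.span ℝ (Set.range fun i => f i p.1)).starProjection p.2 := by
  have h := measurable_starProjection_span_image Finset.univ f hf
  simpa using h

lemma measurable_finrank_span {s : ℕ} {X ι : Type*} [MeasurableSpace X] [Fintype ι]
    (f : ι → X → EuclideanSpace ℝ (Fin s × Fin s)) (hf : ∀ i, Measurable (f i)) :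
    Measurable fun x => (Module.finrank ℝ (Submodule.span ℝ (Set.range fun i => f i x)) : ℝ) := by
  simp only [← sum_norm_starProjection_single]
  refine Finset.measurable_fun_sum _ fun j _ => Finset.measurable_fun_sum _ fun i _ => ?_
  exact ((measurable_starProjection_span f hf).comp
    (measurable_id.prodMk measurable_const)).norm.pow_const 2
end MeasProj

/-! ### The flag of an algorithm on a zero-padded block -/

section BlockFlag
variable {s n k t : ℕ}

/-- The embedding of the top-left `s × s` block into an `n × n` index set. -/
def blockEmb (h : s ≤ n) (p : Fin s × Fin s) : Fin n × Fin n :=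
  (Fin.castLE h p.1, Fin.castLE h p.2)

lemma blockEmb_injective (h : s ≤ n) : Function.Injective (blockEmb h) := by
  rintro ⟨a, b⟩ ⟨c, d⟩ hp
  simpa [blockEmb] using hp

/-- Zero-padding of an `s × s` block to an `n × n` matrix. -/
def pad (h : s ≤ n) (b : EuclideanSpace ℝ (Fin s × Fin s)) : Matrix (Fin n) (Fin n) ℝ :=
  Matrix.of fun i j => Function.extend (blockEmb h) b 0 (i, j)

lemma pad_blockEmb (h : s ≤ n) (b : EuclideanSpace ℝ (Fin s × Fin s)) (p : Fin s × Fin s) :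
    pad h b (blockEmb h p).1 (blockEmb h p).2 = b p :=
  (blockEmb_injective h).extend_apply _ _ _

lemma pad_of_notMem (h : s ≤ n) (b : EuclideanSpace ℝ (Fin s × Fin s)) (q : Fin n × Fin n)
    (hq : q ∉ Set.range (blockEmb h)) : pad h b q.1 q.2 = 0 :=
  Function.extend_apply' _ _ _ hq

lemma card_pad_le (h : s ≤ n) (b : EuclideanSpace ℝ (Fin s × Fin s)) :
    (Finset.univ.filter fun q : Fin n × Fin n => pad h b q.1 q.2 ≠ 0).card ≤ s * s := by
  calc _ ≤ (Finset.univ.image (blockEmb h)).card := by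
        refine Finset.card_le_card fun q hq => ?_
        by_contra hc
        refine (Finset.mem_filter.1 hq).2 (pad_of_notMem h b q fun hr => hc ?_)
        obtain ⟨p, rfl⟩ := hr
        exact Finset.mem_image_of_mem _ (Finset.mem_univ _)
    _ ≤ (Finset.univ : Finset (Fin s × Fin s)).card := Finset.card_image_le
    _ = s * s := by simp

/-- Restriction of a query (a vector in `ℝ^{n²}`) to the top-left block. -/
def restr (h : s ≤ n) (q : Fin (n * n) → ℝ) : EuclideanSpace ℝ (Fin s × Fin s) :=
  WithLp.toLp 2 fun p => q (finProdFinEquiv (blockEmb h p))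

lemma dotProduct_vec_pad (h : s ≤ n) (q : Fin (n * n) → ℝ)
    (b : EuclideanSpace ℝ (Fin s × Fin s)) :
    q ⬝ᵥ vec n (pad h b) = inner ℝ (restr h q) b := by
  rw [dotProduct, ← Equiv.sum_comp finProdFinEquiv, PiLp.inner_apply]
  symm
  refine Fintype.sum_of_injective (blockEmb h) (blockEmb_injective h) _ _ ?_ ?_
  · intro x hx
    have := pad_of_notMem h b x hx
    simp [_root_.vec, this]
  · intro p
    have := pad_blockEmb h b p
    simp only [_root_.vec, Equiv.symm_apply_apply, this, restr]
    simp [mul_comm]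

/-- The transcript of the algorithm `Q` on the zero-padded block `b`. -/
def transcript (h : s ≤ n) (Q : QueryMaps (n * n) k t) (b : EuclideanSpace ℝ (Fin s × Fin s)) :
    Fin t → Fin k → ℝ :=
  QueryMaps.resp Q (vec n (pad h b))

/-- The block part of the `i`-th query of round `j` along the run on `b`. -/
def queryVec (h : s ≤ n) (Q : QueryMaps (n * n) k t) (b : EuclideanSpace ℝ (Fin s × Fin s))
    (p : Fin t × Fin k) : EuclideanSpace ℝ (Fin s × Fin s) :=
  restr h (Q p.1 (fun i => transcript h Q b ⟨i.1, i.isLt.trans p.1.isLt⟩) p.2)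

lemma transcript_eq (h : s ≤ n) (Q : QueryMaps (n * n) k t)
    (b : EuclideanSpace ℝ (Fin s × Fin s)) (j : Fin t) (i : Fin k) :
    transcript h Q b j i = inner ℝ (queryVec h Q b (j, i)) b := by
  rw [queryVec, ← dotProduct_vec_pad, transcript, QueryMaps.resp]
  rfl

/-- The `l`-th column of the top-left block of `B`. -/
def blockCol (h : s ≤ n) (B : Matrix (Fin n) (Fin n) ℝ) (l : Fin s) : EuclideanSpace ℝ (Fin s) :=
  WithLp.toLp 2 fun i => B (Fin.castLE h i) (Fin.castLE h l)

/-- The vectors `(B' e_l) ⊗ e_j`, where `B'` is the top-left block of `B`. Their span is the space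
of all `s × s` matrices whose column space lies in that of `B'`. -/
def outVec (h : s ≤ n) (B : Matrix (Fin n) (Fin n) ℝ) (p : Fin s × Fin s) :
    EuclideanSpace ℝ (Fin s × Fin s) :=
  outerLin s (blockCol h B p.1) (EuclideanSpace.single p.2 1)

lemma finrank_outVec_le (h : s ≤ n) (B : Matrix (Fin n) (Fin n) ℝ) :
    Module.finrank ℝ (Submodule.span ℝ (Set.range (outVec h B))) ≤ s * B.rank := by
  set B' : Matrix (Fin s) (Fin s) ℝ := B.submatrix (Fin.castLE h) (Fin.castLE h) with hB'
  have hr : B'.rank ≤ B.rank := Matrix.rank_submatrix_le _ _ _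
  set C := Submodule.span ℝ (Set.range B'.col) with hC
  have hCr : Module.finrank ℝ C = B'.rank := (Matrix.rank_eq_finrank_span_cols B').symm
  set Φ : (Fin s → C) →ₗ[ℝ] EuclideanSpace ℝ (Fin s × Fin s) :=
    ∑ j, ((outerLin s).flip (EuclideanSpace.single j 1)) ∘ₗ
      ((WithLp.linearEquiv 2 ℝ (Fin s → ℝ)).symm : _ →ₗ[ℝ] _) ∘ₗ C.subtype ∘ₗ
        LinearMap.proj j with hΦ
  have hle : Submodule.span ℝ (Set.range (outVec h B)) ≤ LinearMap.range Φ := by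
    rw [Submodule.span_le]
    rintro _ ⟨p, rfl⟩
    refine ⟨Pi.single p.2 ⟨B'.col p.1, Submodule.subset_span ⟨p.1, rfl⟩⟩, ?_⟩
    rw [hΦ, LinearMap.sum_apply, Finset.sum_eq_single p.2]
    · simp only [LinearMap.comp_apply, LinearMap.proj_apply, Pi.single_eq_same]
      rfl
    · intro j _ hj
      simp [hj]
    · simp
  calc _ ≤ Module.finrank ℝ (LinearMap.range Φ) := Submodule.finrank_mono hle
    _ ≤ Module.finrank ℝ (Fin s → C) := LinearMap.finrank_range_le Φ
    _ = s * Module.finrank ℝ C := by simp [Module.finrank_pi_fintype]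
    _ ≤ _ := by rw [hCr]; exact Nat.mul_le_mul_left _ hr

/-- The vectors spanning the `j`-th space of the flag on input `b`: the queries of the rounds
before `j` and, once `j > t`, the matrices `outVec` of the output (dropped in the case that they
span more than `k` dimensions). -/
def flagVec (h : s ≤ n) (Q : QueryMaps (n * n) k t)
    (o : (Fin t → Fin k → ℝ) → Matrix (Fin n) (Fin n) ℝ) (j : ℕ)
    (b : EuclideanSpace ℝ (Fin s × Fin s)) :
    (Fin t × Fin k) ⊕ (Fin s × Fin s) → EuclideanSpace ℝ (Fin s × Fin s)
  | Sum.inl p => if (p.1 : ℕ) < j then queryVec h Q b p else 0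
  | Sum.inr p => if t < j ∧ (Module.finrank ℝ (Submodule.span ℝ (Set.range
      (outVec h (o (transcript h Q b))))) : ℝ) ≤ k then outVec h (o (transcript h Q b)) p else 0

/-- The flag of subspaces revealed by the algorithm, in which the output counts as the queries of
round `t + 1`. -/
def flag (h : s ≤ n) (Q : QueryMaps (n * n) k t)
    (o : (Fin t → Fin k → ℝ) → Matrix (Fin n) (Fin n) ℝ) (j : ℕ)
    (b : EuclideanSpace ℝ (Fin s × Fin s)) : Submodule ℝ (EuclideanSpace ℝ (Fin s × Fin s)) :=
  Submodule.span ℝ (Set.range (flagVec h Q o j b))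

lemma finrank_flag_le (h : s ≤ n) (Q : QueryMaps (n * n) k t)
    (o : (Fin t → Fin k → ℝ) → Matrix (Fin n) (Fin n) ℝ) (j : ℕ)
    (b : EuclideanSpace ℝ (Fin s × Fin s)) : Module.finrank ℝ (flag h Q o j b) ≤ j * k := by
  set S : Submodule ℝ (EuclideanSpace ℝ (Fin s × Fin s)) :=
    Submodule.span ℝ ((Finset.univ.filter fun p : Fin t × Fin k => (p.1 : ℕ) < j).image
      (queryVec h Q b) : Finset _) with hS
  have hSle : Module.finrank ℝ S ≤ min j t * k := by
    refine (finrank_span_finset_le_card _).trans (Finset.card_image_le.trans ?_)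
    calc _ ≤ (Finset.range (min j t) ×ˢ (Finset.univ : Finset (Fin k))).card := by
          refine Finset.card_le_card_of_injOn (fun p => ((p.1 : ℕ), p.2)) ?_ ?_
          · intro p hp
            simp at hp
            simp [hp]
          · rintro ⟨a, b⟩ _ ⟨c, d⟩ _ hp
            simpa [Fin.ext_iff] using hp
      _ = _ := by simp
  by_cases hj : t < j ∧ (Module.finrank ℝ (Submodule.span ℝ (Set.range
      (outVec h (o (transcript h Q b))))) : ℝ) ≤ k
  · have h1 : flag h Q o j b ≤ S ⊔ Submodule.span ℝ (Set.range
        (outVec h (o (transcript h Q b)))) := by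
      rw [flag, Submodule.span_le]
      rintro _ ⟨p | p, rfl⟩
      · simp only [flagVec]
        split_ifs with hp
        · refine Submodule.mem_sup_left (Submodule.subset_span ?_)
          simp only [Finset.coe_image]
          exact ⟨p, by simpa using hp, rfl⟩
        · exact zero_mem _
      · simp only [flagVec, if_pos hj]
        exact Submodule.mem_sup_right (Submodule.subset_span ⟨p, rfl⟩)
    have h2 : Module.finrank ℝ (Submodule.span ℝ (Set.range
      (outVec h (o (transcript h Q b))))) ≤ k := by exact_mod_cast hj.2
    calc _ ≤ _ := Submodule.finrank_mono h1
      _ ≤ _ := Submodule.finrank_add_le_finrank_add_finrank _ _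
      _ ≤ min j t * k + k := by gcongr
      _ = (t + 1) * k := by rw [min_eq_right hj.1.le]; ring
      _ ≤ j * k := Nat.mul_le_mul_right _ hj.1
  · have h1 : flag h Q o j b ≤ S := by
      rw [flag, Submodule.span_le]
      rintro _ ⟨p | p, rfl⟩
      · simp only [flagVec]
        split_ifs with hp
        · refine Submodule.subset_span ?_
          simp only [Finset.coe_image]
          exact ⟨p, by simpa using hp, rfl⟩
        · exact zero_mem _
      · simp only [flagVec, if_neg hj]
        exact zero_mem _
    exact (Submodule.finrank_mono h1).trans (hSle.trans (Nat.mul_le_mul_right _ (min_le_left _ _)))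

lemma queryVec_mem_flag (h : s ≤ n) (Q : QueryMaps (n * n) k t)
    (o : (Fin t → Fin k → ℝ) → Matrix (Fin n) (Fin n) ℝ) (j : ℕ)
    (b : EuclideanSpace ℝ (Fin s × Fin s)) (p : Fin t × Fin k) (hp : (p.1 : ℕ) < j) :
    queryVec h Q b p ∈ flag h Q o j b :=
  Submodule.subset_span ⟨Sum.inl p, by simp [flagVec, hp]⟩

/-- Two inputs with the same component in the `j`-th space of the flag have the same transcript in
the first `j` rounds. -/
lemma transcript_congr (h : s ≤ n) (Q : QueryMaps (n * n) k t)
    (o : (Fin t → Fin k → ℝ) → Matrix (Fin n) (Fin n) ℝ) (j : ℕ)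
    {b b' : EuclideanSpace ℝ (Fin s × Fin s)}
    (hb : (flag h Q o j b).starProjection b' = (flag h Q o j b).starProjection b)
    (i : ℕ) (hi : i < t) (hij : i < j) :
    transcript h Q b' ⟨i, hi⟩ = transcript h Q b ⟨i, hi⟩ := by
  have hin : ∀ q ∈ flag h Q o j b, inner ℝ q b' = inner ℝ q b := by
    intro q hq
    have e : ∀ x, inner ℝ q x = inner ℝ q ((flag h Q o j b).starProjection x) := fun x => by
      rw [← Submodule.inner_starProjection_left_eq_right,
        Submodule.starProjection_eq_self_iff.2 hq]
    rw [e, hb, ← e]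
  induction i using Nat.strong_induction_on with
  | _ i ih =>
    ext l
    rw [transcript_eq, transcript_eq]
    have hq : queryVec h Q b' (⟨i, hi⟩, l) = queryVec h Q b (⟨i, hi⟩, l) := by
      simp only [queryVec]
      congr 3
      ext i' : 1
      exact ih i' i'.isLt (i'.isLt.trans hi) (i'.isLt.trans hij)
    rw [hq]
    exact hin _ (queryVec_mem_flag h Q o j b _ hij)

lemma flag_mono (h : s ≤ n) (Q : QueryMaps (n * n) k t)
    (o : (Fin t → Fin k → ℝ) → Matrix (Fin n) (Fin n) ℝ) (j : ℕ)
    (b : EuclideanSpace ℝ (Fin s × Fin s)) : flag h Q o j b ≤ flag h Q o (j + 1) b := by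
  rw [flag, Submodule.span_le]
  rintro _ ⟨p | p, rfl⟩
  · simp only [flagVec]
    split_ifs with hp
    · exact queryVec_mem_flag h Q o (j + 1) b p (by omega)
    · exact zero_mem _
  · simp only [flagVec]
    split_ifs with hp
    · exact Submodule.subset_span ⟨Sum.inr p, by simp [flagVec, hp.2, hp.1.trans (Nat.lt_succ_self j)]⟩
    · exact zero_mem _

lemma flag_adapted (h : s ≤ n) (Q : QueryMaps (n * n) k t)
    (o : (Fin t → Fin k → ℝ) → Matrix (Fin n) (Fin n) ℝ) (j : ℕ)
    {b b' : EuclideanSpace ℝ (Fin s × Fin s)}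
    (hb : (flag h Q o j b).starProjection b' = (flag h Q o j b).starProjection b) :
    flag h Q o (j + 1) b' = flag h Q o (j + 1) b := by
  have htr := transcript_congr h Q o j hb
  rw [flag, flag]
  congr 2
  ext p : 1
  rcases p with p | p
  · simp only [flagVec]
    split_ifs with hp
    · simp only [queryVec]
      congr 3
      ext i' : 1
      exact htr i' (i'.isLt.trans p.1.isLt) (by have := i'.isLt; omega)
    · rfl
  · simp only [flagVec]
    by_cases hj : t < j + 1
    · have : transcript h Q b' = transcript h Q b := by
        ext i : 1
        exact htr i i.isLt (by have := i.isLt; omega)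
      rw [this]
    · simp [hj]

section Meas
variable {Ω : Type} [MeasurableSpace Ω] {Qf : Ω → QueryMaps (n * n) k t}
  {out : Ω → (Fin t → Fin k → ℝ) → Matrix (Fin n) (Fin n) ℝ}

lemma measurable_queryVec_of (h : s ≤ n)
    (hQ : ∀ (j : Fin t) (i : Fin k) (l : Fin (n * n)),
      Measurable fun p : Ω × (Fin (j : ℕ) → Fin k → ℝ) => Qf p.1 j p.2 i l)
    (p : Fin t × Fin k)
    (htr : ∀ i : Fin (p.1 : ℕ), Measurable fun x : Ω × EuclideanSpace ℝ (Fin s × Fin s) =>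
      transcript h (Qf x.1) x.2 ⟨i.1, i.isLt.trans p.1.isLt⟩) :
    Measurable fun x : Ω × EuclideanSpace ℝ (Fin s × Fin s) => queryVec h (Qf x.1) x.2 p := by
  refine (PiLp.continuous_toLp 2 _).measurable.comp (measurable_pi_lambda _ fun q => ?_)
  exact (hQ p.1 p.2 (finProdFinEquiv (blockEmb h q))).comp
    (measurable_fst.prodMk (measurable_pi_lambda _ htr))

lemma measurable_transcript (h : s ≤ n)
    (hQ : ∀ (j : Fin t) (i : Fin k) (l : Fin (n * n)),
      Measurable fun p : Ω × (Fin (j : ℕ) → Fin k → ℝ) => Qf p.1 j p.2 i l) (j : ℕ) (hj : j < t) :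
    Measurable fun x : Ω × EuclideanSpace ℝ (Fin s × Fin s) =>
      transcript h (Qf x.1) x.2 ⟨j, hj⟩ := by
  induction j using Nat.strong_induction_on with
  | _ j ih =>
    refine measurable_pi_lambda _ fun l => ?_
    simp only [transcript_eq]
    exact (measurable_queryVec_of h hQ (⟨j, hj⟩, l) fun i =>
      ih i i.isLt (i.isLt.trans hj)).inner measurable_snd

lemma measurable_output (h : s ≤ n)
    (hQ : ∀ (j : Fin t) (i : Fin k) (l : Fin (n * n)),
      Measurable fun p : Ω × (Fin (j : ℕ) → Fin k → ℝ) => Qf p.1 j p.2 i l)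
    (hO : ∀ i j : Fin n, Measurable fun p : Ω × (Fin t → Fin k → ℝ) => out p.1 p.2 i j)
    (i j : Fin n) :
    Measurable fun x : Ω × EuclideanSpace ℝ (Fin s × Fin s) =>
      out x.1 (transcript h (Qf x.1) x.2) i j :=
  (hO i j).comp (measurable_fst.prodMk
    (measurable_pi_lambda _ fun i => measurable_transcript h hQ i i.isLt))

lemma measurable_outVec (h : s ≤ n)
    (hQ : ∀ (j : Fin t) (i : Fin k) (l : Fin (n * n)),
      Measurable fun p : Ω × (Fin (j : ℕ) → Fin k → ℝ) => Qf p.1 j p.2 i l)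
    (hO : ∀ i j : Fin n, Measurable fun p : Ω × (Fin t → Fin k → ℝ) => out p.1 p.2 i j)
    (p : Fin s × Fin s) :
    Measurable fun x : Ω × EuclideanSpace ℝ (Fin s × Fin s) =>
      outVec h (out x.1 (transcript h (Qf x.1) x.2)) p := by
  refine ((outerLin s).flip
    (EuclideanSpace.single p.2 1)).continuous_of_finiteDimensional.measurable.comp ?_
  exact (PiLp.continuous_toLp 2 _).measurable.comp
    (measurable_pi_lambda _ fun i => measurable_output h hQ hO _ _)

lemma measurable_flagVec (h : s ≤ n)
    (hQ : ∀ (j : Fin t) (i : Fin k) (l : Fin (n * n)),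
      Measurable fun p : Ω × (Fin (j : ℕ) → Fin k → ℝ) => Qf p.1 j p.2 i l)
    (hO : ∀ i j : Fin n, Measurable fun p : Ω × (Fin t → Fin k → ℝ) => out p.1 p.2 i j)
    (j : ℕ) (p : (Fin t × Fin k) ⊕ (Fin s × Fin s)) :
    Measurable fun x : Ω × EuclideanSpace ℝ (Fin s × Fin s) =>
      flagVec h (Qf x.1) (out x.1) j x.2 p := by
  rcases p with p | p
  · simp only [flagVec]
    split_ifs
    · exact measurable_queryVec_of h hQ p fun i => measurable_transcript h hQ i _
    · exact measurable_const
  · simp only [flagVec]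
    refine Measurable.ite ?_ (measurable_outVec h hQ hO p) measurable_const
    have hm := measurable_finrank_span (fun p (x : Ω × EuclideanSpace ℝ (Fin s × Fin s)) =>
      outVec h (out x.1 (transcript h (Qf x.1) x.2)) p) (measurable_outVec h hQ hO)
    have hm' := measurableSet_le hm (measurable_const (a := (k : ℝ)))
    exact (MeasurableSet.const (t < j)).inter hm'

lemma measurable_flag (h : s ≤ n)
    (hQ : ∀ (j : Fin t) (i : Fin k) (l : Fin (n * n)),
      Measurable fun p : Ω × (Fin (j : ℕ) → Fin k → ℝ) => Qf p.1 j p.2 i l)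
    (hO : ∀ i j : Fin n, Measurable fun p : Ω × (Fin t → Fin k → ℝ) => out p.1 p.2 i j)
    (j : ℕ) :
    Measurable fun x : (Ω × EuclideanSpace ℝ (Fin s × Fin s)) × EuclideanSpace ℝ (Fin s × Fin s) =>
      (flag h (Qf x.1.1) (out x.1.1) j x.1.2).starProjection x.2 :=
  measurable_starProjection_span (fun p (x : Ω × EuclideanSpace ℝ (Fin s × Fin s)) =>
    flagVec h (Qf x.1) (out x.1) j x.2 p) (measurable_flagVec h hQ hO j)

lemma adaptiveFlag_flag (h : s ≤ n)
    (hQ : ∀ (j : Fin t) (i : Fin k) (l : Fin (n * n)),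
      Measurable fun p : Ω × (Fin (j : ℕ) → Fin k → ℝ) => Qf p.1 j p.2 i l)
    (hO : ∀ i j : Fin n, Measurable fun p : Ω × (Fin t → Fin k → ℝ) => out p.1 p.2 i j)
    (ω : Ω) : AdaptiveFlag (flag h (Qf ω) (out ω)) := by
  refine ⟨fun b => ?_, fun j b => ?_, fun j => ?_, fun j b b' hb => ?_⟩
  · rw [flag, Submodule.span_eq_bot]
    rintro _ ⟨p | p, rfl⟩
    · simp [flagVec]
    · simp [flagVec]
  · exact flag_mono h (Qf ω) (out ω) j b
  · have h1 : Measurable fun p : EuclideanSpace ℝ (Fin s × Fin s) × EuclideanSpace ℝ (Fin s × Fin s)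
        => ((ω, p.1), p.2) := (measurable_const.prodMk measurable_fst).prodMk measurable_snd
    have h2 := (measurable_flag h hQ hO j).comp h1
    simp only [Function.comp_def] at h2
    exact h2
  · exact flag_adapted h (Qf ω) (out ω) j hb
end Meas
end BlockFlag

/-! ### Spectral norm and the consequence of success -/

section Spectral

lemma sqNorm_eq {ι : Type*} [Fintype ι] (x : ι → ℝ) : sqNorm x = ‖WithLp.toLp 2 x‖ ^ 2 := by
  rw [EuclideanSpace.real_norm_sq_eq]; rfl

lemma sqrt_sqNorm {ι : Type*} [Fintype ι] (x : ι → ℝ) : √(sqNorm x) = ‖WithLp.toLp 2 x‖ := by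
  rw [sqNorm_eq, Real.sqrt_sq (norm_nonneg _)]

lemma specNorm_nonneg {m n : Type*} [Fintype m] [Fintype n] (A : Matrix m n ℝ) :
    0 ≤ specNorm A := by
  apply Real.sSup_nonneg
  rintro _ ⟨x, _, rfl⟩
  positivity

lemma specNorm_le {m n : Type*} [Fintype m] [Fintype n] {A : Matrix m n ℝ} {c : ℝ} (hc : 0 ≤ c)
    (h : ∀ x : n → ℝ, sqNorm (A.mulVec x) ≤ c ^ 2 * sqNorm x) : specNorm A ≤ c := by
  apply Real.sSup_le _ hc
  rintro _ ⟨x, hx, rfl⟩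
  apply Real.sqrt_le_iff.2 ⟨hc, (h x).trans ?_⟩
  have hx : sqNorm x ≤ 1 := hx
  nlinarith [sq_nonneg c]

lemma norm_mulVec_le_specNorm {m n : Type*} [Fintype m] [Fintype n] (A : Matrix m n ℝ)
    (x : n → ℝ) : ‖WithLp.toLp 2 (A.mulVec x)‖ ≤ specNorm A * ‖WithLp.toLp 2 x‖ := by
  set L := (Matrix.toEuclideanLin A).toContinuousLinearMap with hL
  have hLx : ∀ x : n → ℝ, WithLp.toLp 2 (A.mulVec x) = L (WithLp.toLp 2 x) := fun x => rfl
  have hbdd : BddAbove ((fun x : n → ℝ => √(sqNorm (A.mulVec x))) '' {x | sqNorm x ≤ 1}) := by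
    refine ⟨‖L‖, ?_⟩
    rintro _ ⟨x, hx, rfl⟩
    have hx : sqNorm x ≤ 1 := hx
    rw [sqNorm_eq] at hx
    change √(sqNorm (A.mulVec x)) ≤ _
    rw [sqrt_sqNorm, hLx]
    refine (L.le_opNorm _).trans ?_
    have : ‖WithLp.toLp 2 x‖ ≤ 1 := by nlinarith [norm_nonneg (WithLp.toLp 2 x)]
    nlinarith [norm_nonneg L]
  by_cases h0 : ‖WithLp.toLp 2 x‖ = 0
  · have : WithLp.toLp 2 x = 0 := norm_eq_zero.1 h0
    rw [hLx, this]; simp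
  have hpos : 0 < ‖WithLp.toLp 2 x‖ := lt_of_le_of_ne (norm_nonneg _) (Ne.symm h0)
  have key : √(sqNorm (A.mulVec (‖WithLp.toLp 2 x‖⁻¹ • x))) ≤ specNorm A := by
    refine le_csSup hbdd ⟨_, ?_, rfl⟩
    change sqNorm _ ≤ 1
    rw [sqNorm_eq, WithLp.toLp_smul, norm_smul, norm_inv, norm_norm, inv_mul_cancel₀ h0]
    norm_num
  rw [sqrt_sqNorm, hLx, WithLp.toLp_smul, map_smul, norm_smul, norm_inv, norm_norm,
    inv_mul_le_iff₀ hpos] at key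
  rw [hLx, mul_comm]; exact key

lemma singVal_le {m n : Type*} [Fintype m] [Fintype n] (A X : Matrix m n ℝ) (r : ℕ)
    (hX : X.rank ≤ r) : singVal A (r + 1) ≤ specNorm (A - X) := by
  refine csInf_le ⟨0, ?_⟩ ⟨X, by simpa using hX, rfl⟩
  rintro _ ⟨X, _, rfl⟩
  exact specNorm_nonneg _

variable {s n k t : ℕ}

lemma pad_add (h : s ≤ n) (b b' : EuclideanSpace ℝ (Fin s × Fin s)) :
    pad h (b + b') = pad h b + pad h b' := by
  ext i j
  by_cases hq : (i, j) ∈ Set.range (blockEmb h)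
  · obtain ⟨p, hp⟩ := hq
    have e := fun b => pad_blockEmb h b p
    rw [hp] at e
    simp only [Matrix.add_apply]
    simp [e]
  · have e := fun b => pad_of_notMem h b (i, j) hq
    simp only [Matrix.add_apply]
    simp [e]

/-- Zero-padding of a vector. -/
def padVec (n : ℕ) (h : s ≤ n) (x : EuclideanSpace ℝ (Fin s)) : Fin n → ℝ :=
  Function.extend (Fin.castLE h) x 0

lemma padVec_castLE (h : s ≤ n) (x : EuclideanSpace ℝ (Fin s)) (i : Fin s) :
    padVec n h x (Fin.castLE h i) = x i :=
  (Fin.castLE_injective h).extend_apply _ _ _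

lemma padVec_of_notMem (h : s ≤ n) (x : EuclideanSpace ℝ (Fin s)) (i : Fin n)
    (hi : i ∉ Set.range (Fin.castLE h)) : padVec n h x i = 0 :=
  Function.extend_apply' _ _ _ hi

lemma norm_padVec (h : s ≤ n) (x : EuclideanSpace ℝ (Fin s)) :
    ‖WithLp.toLp 2 (padVec n h x)‖ ^ 2 = ‖x‖ ^ 2 := by
  rw [EuclideanSpace.real_norm_sq_eq, EuclideanSpace.real_norm_sq_eq]
  symm
  refine Fintype.sum_of_injective (Fin.castLE h) (Fin.castLE_injective h) _ _ ?_ ?_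
  · intro i hi
    simp [padVec_of_notMem h x i hi]
  · intro i
    simp [padVec_castLE]

lemma pad_mulVec_castLE (h : s ≤ n) (b : EuclideanSpace ℝ (Fin s × Fin s)) (x : Fin n → ℝ)
    (i : Fin s) : (pad h b).mulVec x (Fin.castLE h i)
      = act s b (WithLp.toLp 2 fun j => x (Fin.castLE h j)) i := by
  rw [act_apply, Matrix.mulVec, dotProduct]
  symm
  refine Fintype.sum_of_injective (Fin.castLE h) (Fin.castLE_injective h) _ _ ?_ ?_
  · intro j hj
    rw [pad_of_notMem h b (Fin.castLE h i, j), zero_mul]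
    rintro ⟨p, hp⟩
    exact hj ⟨p.2, congrArg Prod.snd hp⟩
  · intro j
    exact congrArg (· * _) (pad_blockEmb h b (i, j)).symm

lemma pad_mulVec_of_notMem (h : s ≤ n) (b : EuclideanSpace ℝ (Fin s × Fin s)) (x : Fin n → ℝ)
    (i : Fin n) (hi : i ∉ Set.range (Fin.castLE h)) : (pad h b).mulVec x i = 0 := by
  rw [Matrix.mulVec, dotProduct]
  refine Finset.sum_eq_zero fun j _ => ?_
  rw [pad_of_notMem h b (i, j), zero_mul]
  rintro ⟨p, hp⟩
  exact hi ⟨p.1, congrArg Prod.fst hp⟩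

lemma sum_castLE_le (h : s ≤ n) (f : Fin n → ℝ) (hf : ∀ i, 0 ≤ f i) :
    ∑ i : Fin s, f (Fin.castLE h i) ≤ ∑ i, f i := by
  have : ∑ i : Fin s, f (Fin.castLE h i)
      = ∑ i ∈ Finset.univ.map ⟨Fin.castLE h, Fin.castLE_injective h⟩, f i := by
    rw [Finset.sum_map]; rfl
  rw [this]
  exact Finset.sum_le_sum_of_subset_of_nonneg (Finset.subset_univ _) fun i _ _ => hf i

lemma specNorm_pad_le (h : s ≤ n) (b : EuclideanSpace ℝ (Fin s × Fin s)) {c : ℝ} (hc : 0 ≤ c)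
    (hb : ∀ x, ‖act s b x‖ ≤ c * ‖x‖) : specNorm (pad h b) ≤ c := by
  refine specNorm_le hc fun x => ?_
  set x' : EuclideanSpace ℝ (Fin s) := WithLp.toLp 2 fun j => x (Fin.castLE h j) with hx'
  have h1 : sqNorm ((pad h b).mulVec x) = ‖act s b x'‖ ^ 2 := by
    rw [EuclideanSpace.real_norm_sq_eq]
    symm
    refine Fintype.sum_of_injective (Fin.castLE h) (Fin.castLE_injective h) _ _ ?_ ?_
    · intro i hi
      simp [pad_mulVec_of_notMem h b x i hi]
    · intro i
      rw [pad_mulVec_castLE]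
  have h2 : ‖x'‖ ^ 2 ≤ sqNorm x := by
    rw [EuclideanSpace.real_norm_sq_eq]
    exact sum_castLE_le h (fun i => x i ^ 2) fun i => sq_nonneg _
  rw [h1]
  calc ‖act s b x'‖ ^ 2 ≤ (c * ‖x'‖) ^ 2 := by gcongr; exact hb x'
    _ = c ^ 2 * ‖x'‖ ^ 2 := by ring
    _ ≤ _ := by gcongr

lemma rank_pad_outerLin_le (h : s ≤ n) (u v : EuclideanSpace ℝ (Fin s)) :
    (pad h (outerLin s u v)).rank ≤ 1 := by
  have : pad h (outerLin s u v) = Matrix.vecMulVec (padVec n h u) (padVec n h v) := by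
    ext i j
    rw [Matrix.vecMulVec_apply]
    by_cases hi : i ∈ Set.range (Fin.castLE h)
    · by_cases hj : j ∈ Set.range (Fin.castLE h)
      · obtain ⟨i, rfl⟩ := hi
        obtain ⟨j, rfl⟩ := hj
        rw [padVec_castLE, padVec_castLE]
        exact pad_blockEmb h _ (i, j)
      · rw [padVec_of_notMem h v j hj, mul_zero]
        refine pad_of_notMem h _ (i, j) ?_
        rintro ⟨p, hp⟩
        exact hj ⟨p.2, congrArg Prod.snd hp⟩
    · rw [padVec_of_notMem h u i hi, zero_mul]
      refine pad_of_notMem h _ (i, j) ?_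
      rintro ⟨p, hp⟩
      exact hi ⟨p.1, congrArg Prod.fst hp⟩
  rw [this]
  exact Matrix.rank_vecMulVec_le _ _

lemma norm_sq_sub_le_starProjection {E : Type*} [NormedAddCommGroup E] [InnerProductSpace ℝ E]
    [FiniteDimensional ℝ E] (W : Submodule ℝ E) (w z : E) (hz : z ∈ W) :
    ‖w‖ ^ 2 - ‖w - z‖ ^ 2 ≤ ‖W.starProjection w‖ ^ 2 := by
  have h1 := Submodule.norm_sq_eq_add_norm_sq_starProjection w W
  have h2 := norm_starProjection_sq_le Wᗮ (w - z)
  have h3 : Wᗮ.starProjection z = 0 :=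
    Submodule.starProjection_apply_eq_zero_iff _ |>.2 (by simpa using hz)
  rw [map_sub, h3, sub_zero] at h2
  linarith

lemma act_outerLin (u v x : EuclideanSpace ℝ (Fin s)) :
    act s (outerLin s u v) x = (inner ℝ v x : ℝ) • u := by
  ext i
  simp only [act_apply, outerLin_apply, PiLp.smul_apply, PiLp.inner_apply, smul_eq_mul,
    Finset.sum_mul]
  refine Finset.sum_congr rfl fun j _ => ?_
  simp; ring

/-- If the output is a good approximation, then its column space captures most of the spike: the
matrix `(B' v / s) ⊗ v` is close to the spike and lies in the last space of the flag. -/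
lemma le_projection_of_success (h : s ≤ n) (hs : 0 < s) {r : ℕ} (hr : 1 ≤ r) (hk : s * r ≤ k)
    (Q : QueryMaps (n * n) k t) (o : (Fin t → Fin k → ℝ) → Matrix (Fin n) (Fin n) ℝ)
    (e : (Fin s → Bool) × (Fin s → Bool)) (b : EuclideanSpace ℝ (Fin s × Fin s))
    (hb : b ∉ badSet s)
    (hrank : (o (transcript h Q (b + spike s e))).rank ≤ r)
    (happ : specNorm (pad h (b + spike s e) - o (transcript h Q (b + spike s e)))
      ≤ 2 * singVal (pad h (b + spike s e)) (r + 1)) :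
    5000 * s < ‖(flag h Q o (t + 1) (b + spike s e)).starProjection (spike s e)‖ ^ 2 := by
  have hs' : (0 : ℝ) < s := by exact_mod_cast hs
  have hss : √(s : ℝ) ^ 2 = s := Real.sq_sqrt hs'.le
  have hsp : 0 < √(s : ℝ) := Real.sqrt_pos.2 hs'
  set w := spike s e with hw
  set B := o (transcript h Q (b + w)) with hB
  set u := signVec e.1
  set v := signVec e.2 with hv
  have hvn : ‖v‖ ^ 2 = s := norm_signVec_sq _
  have hvn' : ‖v‖ = √s := by rw [← hvn, Real.sqrt_sq (norm_nonneg _)]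
  have hwo : w = outerLin s ((100 / √s) • u) v := by
    rw [hw, spike, map_smul, LinearMap.smul_apply]
  have hsing : singVal (pad h (b + w)) (r + 1) ≤ 16 * √s := by
    refine (singVal_le _ (pad h w) r ?_).trans ?_
    · rw [hwo]; exact (rank_pad_outerLin_le h _ _).trans hr
    · rw [pad_add, add_sub_cancel_right]
      exact specNorm_pad_le h b (by positivity) (norm_act_le_of_notMem_badSet hb)
  set z : EuclideanSpace ℝ (Fin s) := ∑ l, v l • blockCol h B l with hz
  have hbound : ‖act s b v + act s w v - z‖ ≤ 32 * s := by
    have h1 := norm_mulVec_le_specNorm (pad h (b + w) - B) (padVec n h v)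
    have h2 : ‖WithLp.toLp 2 (padVec n h v)‖ = √s := by
      rw [← hvn, ← norm_padVec h v, Real.sqrt_sq (norm_nonneg _)]
    rw [h2] at h1
    have h3 : ‖act s b v + act s w v - z‖
        ≤ ‖WithLp.toLp 2 ((pad h (b + w) - B).mulVec (padVec n h v))‖ := by
      apply le_of_sq_le_sq _ (norm_nonneg _)
      rw [EuclideanSpace.real_norm_sq_eq, EuclideanSpace.real_norm_sq_eq]
      refine le_trans (Finset.sum_le_sum fun i _ => le_of_eq ?_) (sum_castLE_le h _
        fun i => sq_nonneg _)
      congr 1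
      have h4 : (fun j => padVec n h v (Fin.castLE h j)) = v := by
        ext j; rw [padVec_castLE]
      have h5 : B.mulVec (padVec n h v) (Fin.castLE h i) = z i := by
        rw [hz, Matrix.mulVec, dotProduct]
        symm
        simp only [WithLp.ofLp_sum, Finset.sum_apply]
        refine Fintype.sum_of_injective (Fin.castLE h) (Fin.castLE_injective h) _ _ ?_ ?_
        · intro j hj
          rw [padVec_of_notMem h v j hj, mul_zero]
        · intro j
          rw [padVec_castLE]
          simp [blockCol, mul_comm]
      change _ = ((pad h (b + w) - B).mulVec (padVec n h v)) (Fin.castLE h i)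
      rw [Matrix.sub_mulVec, Pi.sub_apply, pad_mulVec_castLE, h4, h5, map_add]
      rfl
    calc _ ≤ _ := h3
      _ ≤ _ := h1
      _ ≤ (2 * (16 * √s)) * √s := by gcongr; linarith
      _ = 32 * √s ^ 2 := by ring
      _ = _ := by rw [hss]
  have hbv : ‖act s b v‖ ≤ 16 * s := by
    have := norm_act_le_of_notMem_badSet hb v
    rw [hvn', mul_assoc, ← sq, hss] at this
    exact this
  have hwz : ‖act s w v - z‖ ≤ 48 * s := by
    have : act s w v - z = (act s b v + act s w v - z) - act s b v := by abel
    rw [this]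
    refine (norm_sub_le _ _).trans ?_
    linarith
  set Z := outerLin s ((1 / (s : ℝ)) • z) v with hZ
  have hwZ : w - Z = outerLin s ((1 / (s : ℝ)) • (act s w v - z)) v := by
    have : (1 / (s : ℝ)) • act s w v = (100 / √s) • u := by
      rw [hwo, act_outerLin, real_inner_self_eq_norm_sq, hvn, smul_smul, one_div,
        inv_mul_cancel₀ hs'.ne', one_smul]
    rw [smul_sub, this, map_sub, LinearMap.sub_apply, ← hwo]
  have hnorm : ‖w - Z‖ ^ 2 ≤ 2304 * s := by
    rw [hwZ, norm_outerLin_sq, hvn, norm_smul, mul_pow, Real.norm_eq_abs, sq_abs]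
    calc (1 / (s : ℝ)) ^ 2 * ‖act s w v - z‖ ^ 2 * s
        ≤ (1 / (s : ℝ)) ^ 2 * (48 * s) ^ 2 * s := by gcongr
      _ = _ := by field_simp; norm_num
  have hmem : Z ∈ flag h Q o (t + 1) (b + w) := by
    have hfr : (Module.finrank ℝ (Submodule.span ℝ (Set.range (outVec h B))) : ℝ) ≤ k := by
      exact_mod_cast (finrank_outVec_le h B).trans ((Nat.mul_le_mul_left _ hrank).trans hk)
    have hout : ∀ p, outVec h B p ∈ flag h Q o (t + 1) (b + w) := fun p =>
      Submodule.subset_span ⟨Sum.inr p, by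
        simp only [flagVec]
        rw [if_pos ⟨Nat.lt_succ_self t, hfr⟩]⟩
    have hv' : v = ∑ j, v j • EuclideanSpace.single j (1 : ℝ) := by
      ext i; simp [Pi.single_apply]
    rw [hZ, map_smul, LinearMap.smul_apply, hz, map_sum, LinearMap.sum_apply]
    refine Submodule.smul_mem _ _ (Submodule.sum_mem _ fun l _ => ?_)
    rw [map_smul, LinearMap.smul_apply]
    refine Submodule.smul_mem _ _ ?_
    rw [hv', map_sum]
    refine Submodule.sum_mem _ fun j _ => ?_
    rw [map_smul]
    exact Submodule.smul_mem _ _ (hout (l, j))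
  have hfin := norm_sq_sub_le_starProjection _ w Z hmem
  have hwn : ‖w‖ ^ 2 = 10000 * s := norm_spike_sq hs e
  linarith
end Spectral

/-! ### The round lower bound -/

section Assembly

lemma eq_zero_of_specNorm_le {m n : Type*} [Fintype m] [Fintype n] (A : Matrix m n ℝ)
    (h : specNorm A ≤ 0) : A = 0 := by
  apply Matrix.ext_of_mulVec_single
  intro i
  have h1 := norm_mulVec_le_specNorm A (Pi.single i 1)
  have h2 : ‖WithLp.toLp 2 (A.mulVec (Pi.single i 1))‖ ≤ 0 :=
    h1.trans (mul_nonpos_of_nonpos_of_nonneg h (norm_nonneg _))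
  have h3 := norm_le_zero_iff.1 h2
  rw [Matrix.zero_mulVec]
  simpa using h3

/-- An approximation within twice the optimal error of a matrix of rank at most `r` is exact. -/
lemma eq_of_approx {n r : ℕ} {A B : Matrix (Fin n) (Fin n) ℝ} (hA : A.rank ≤ r)
    (h : specNorm (A - B) ≤ 2 * singVal A (r + 1)) : A = B := by
  have h1 := singVal_le A A r hA
  have h2 : specNorm (A - A) ≤ 0 := specNorm_le le_rfl fun x => by simp [sqNorm]
  exact sub_eq_zero.1 (eq_zero_of_specNorm_le _ (by linarith))

variable {s n k t r m : ℕ} {Ω : Type} [MeasurableSpace Ω] {μ : Measure Ω} [IsProbabilityMeasure μ]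
  {Qf : Ω → QueryMaps (n * n) k t} {out : Ω → (Fin t → Fin k → ℝ) → Matrix (Fin n) (Fin n) ℝ}

/-- Success forces the squared projection of the spike above `5000 s`, whereas on average over
seeds, spikes and Gaussian matrices it stays below the threshold with probability `3 / 4`. -/
lemma thr_lower_bound (h : s ≤ n) (hs : 2 ≤ s) (hr : 1 ≤ r) (hk : s * r ≤ k)
    (hQ : ∀ (j : Fin t) (i : Fin k) (l : Fin (n * n)),
      Measurable fun p : Ω × (Fin (j : ℕ) → Fin k → ℝ) => Qf p.1 j p.2 i l)
    (hO : ∀ i j : Fin n, Measurable fun p : Ω × (Fin t → Fin k → ℝ) => out p.1 p.2 i j)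
    (hsucc : ∀ a : EuclideanSpace ℝ (Fin s × Fin s), ENNReal.ofReal (3 / 4) ≤
      μ {ω | (out ω (transcript h (Qf ω) a)).rank ≤ r ∧
        specNorm (pad h a - out ω (transcript h (Qf ω) a)) ≤ 2 * singVal (pad h a) (r + 1)}) :
    5000 * (s : ℝ) ≤ thr (k / s) (t + 1) := by
  by_contra hlt
  push Not at hlt
  have hs0 : 0 < s := by omega
  have hs' : (0 : ℝ) < s := by exact_mod_cast hs0
  have hsk : s ≤ k := (Nat.le_mul_of_pos_right s hr).trans hk
  have hκ : (1 : ℝ) ≤ k / s := by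
    rw [le_div_iff₀ hs', one_mul]; exact_mod_cast hsk
  set γ := ProbabilityTheory.stdGaussian (EuclideanSpace ℝ (Fin s × Fin s)) with hγ
  set G : (Fin s → Bool) × (Fin s → Bool) → Set (Ω × EuclideanSpace ℝ (Fin s × Fin s)) :=
    fun e => {x | thr (k / s) (t + 1) <
      ‖(flag h (Qf x.1) (out x.1) (t + 1) (x.2 + spike s e)).starProjection (spike s e)‖ ^ 2} with hG
  have hGm : ∀ e, MeasurableSet (G e) := by
    intro e
    have h1 : Measurable fun x : Ω × EuclideanSpace ℝ (Fin s × Fin s) =>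
        ((x.1, x.2 + spike s e), spike s e) :=
      (measurable_fst.prodMk (measurable_snd.add_const _)).prodMk measurable_const
    have h2 := (measurable_flag h hQ hO (t + 1)).comp h1
    simp only [Function.comp_def] at h2
    exact measurableSet_lt measurable_const (h2.norm.pow_const 2)
  have hbadm : MeasurableSet (badSet s) := measurableSet_le measurable_const measurable_expMoment
  have hone : ∀ e, ENNReal.ofReal (3 / 4) ≤ (∫⁻ ω, γ (Prod.mk ω ⁻¹' G e) ∂μ) + γ (badSet s) := by
    intro e
    have hpt : ∀ b, ENNReal.ofReal (3 / 4) ≤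
        μ ((fun ω => (ω, b)) ⁻¹' G e) + (badSet s).indicator 1 b := by
      intro b
      by_cases hb : b ∈ badSet s
      · rw [Set.indicator_of_mem hb]
        refine le_trans ?_ le_add_self
        simp only [Pi.one_apply, ENNReal.ofReal_le_one]; norm_num
      · refine ((hsucc (b + spike s e)).trans (measure_mono ?_)).trans le_self_add
        rintro ω ⟨h1, h2⟩
        exact hlt.trans (le_projection_of_success h hs0 hr hk (Qf ω) (out ω) e b hb h1 h2)
    have hintg := lintegral_mono (μ := γ) hpt
    rw [lintegral_const, measure_univ, mul_one, lintegral_add_right _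
      (measurable_one.indicator hbadm), lintegral_indicator_one hbadm,
      ← Measure.prod_apply_symm (hGm e), Measure.prod_apply (hGm e)] at hintg
    exact hintg
  have hsum := Finset.sum_le_sum fun e (_ : e ∈ Finset.univ) => hone e
  rw [Finset.sum_add_distrib, ← lintegral_finsetSum _ fun e _ => measurable_measure_prodMk_left (hGm e),
    Finset.sum_const, Finset.sum_const, Finset.card_univ] at hsum
  have hcard : Fintype.card ((Fin s → Bool) × (Fin s → Bool)) = 4 ^ s := by
    simp [← mul_pow]
  have hintg : ∫⁻ ω, ∑ e, γ (Prod.mk ω ⁻¹' G e) ∂μ ≤ ENNReal.ofReal (4 ^ s * (1 / 4)) := by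
    calc _ ≤ ∫⁻ _ω, ENNReal.ofReal (4 ^ s * (1 / 4)) ∂μ := by
          refine lintegral_mono fun ω => ?_
          refine (sum_measure_spike_le hs0 hsk (adaptiveFlag_flag h hQ hO ω)
            (finrank_flag_le h (Qf ω) (out ω)) (t + 1)).trans (ENNReal.ofReal_le_ofReal ?_)
          gcongr
          exact sum_exp_thr_le hκ (t + 1)
      _ = _ := by simp
  have hbad : γ (badSet s) ≤ ENNReal.ofReal (1 / 4) := by
    refine measure_badSet_le.trans (ENNReal.ofReal_le_ofReal ?_)
    have h2 : (2 : ℝ) ≤ Real.exp 1 := by have := Real.add_one_le_exp (1 : ℝ); linarith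
    have h4 : (4 : ℝ) ≤ Real.exp s := by
      calc (4 : ℝ) = 2 ^ 2 := by norm_num
        _ ≤ Real.exp 1 ^ 2 := by gcongr
        _ = Real.exp 2 := by rw [← Real.exp_nat_mul]; norm_num
        _ ≤ _ := Real.exp_le_exp.2 (by exact_mod_cast hs)
    rw [Real.exp_neg, ← one_div]
    exact one_div_le_one_div_of_le (by norm_num) h4
  rw [hcard, nsmul_eq_mul, nsmul_eq_mul] at hsum
  have hfin := hsum.trans (add_le_add hintg (mul_le_mul_right hbad _))
  have hc : ((4 ^ s : ℕ) : ℝ≥0∞) = ENNReal.ofReal (4 ^ s) := by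
    rw [← ENNReal.ofReal_natCast]; norm_num
  rw [hc, ← ENNReal.ofReal_mul (by positivity), ← ENNReal.ofReal_mul (by positivity),
    ← ENNReal.ofReal_add (by positivity) (by positivity),
    ENNReal.ofReal_le_ofReal_iff (by positivity)] at hfin
  have : (0 : ℝ) < 4 ^ s := by positivity
  linarith

/-- Without any measurement the output is independent of the input, so it cannot be exact with
large probability both for the zero matrix and for a matrix unit. -/
lemma rounds_ne_zero (h : s ≤ n) (hs : 0 < s) (hsm : s * s ≤ m) (hr : 1 ≤ r)
    (hO : ∀ i j : Fin n, Measurable fun p : Ω × (Fin t → Fin k → ℝ) => out p.1 p.2 i j)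
    (hsucc : ∀ A : Matrix (Fin n) (Fin n) ℝ,
      (Finset.univ.filter fun q : Fin n × Fin n => A q.1 q.2 ≠ 0).card ≤ m →
      ENNReal.ofReal (3 / 4) ≤
        μ {ω | (out ω (QueryMaps.resp (Qf ω) (_root_.vec n A))).rank ≤ r ∧
          specNorm (A - out ω (QueryMaps.resp (Qf ω) (_root_.vec n A)))
            ≤ 2 * singVal A (r + 1)}) : t ≠ 0 := by
  rintro rfl
  set i₀ : Fin s := ⟨0, hs⟩
  set p₀ := blockEmb h (i₀, i₀)
  set A := pad h (outerLin s (EuclideanSpace.single i₀ 1) (EuclideanSpace.single i₀ 1)) with hA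
  have hA1 : A p₀.1 p₀.2 = 1 := by
    rw [hA, pad_blockEmb, outerLin_apply]; simp
  have hAr : A.rank ≤ r := (rank_pad_outerLin_le h _ _).trans hr
  have h1 := hsucc A ((card_pad_le h _).trans hsm)
  have h2 := hsucc 0 (by simp)
  set S : ℝ → Set Ω := fun c => {ω | out ω default p₀.1 p₀.2 = c} with hS
  have hmeas : Measurable fun ω => out ω default p₀.1 p₀.2 :=
    (hO p₀.1 p₀.2).comp (measurable_id.prodMk measurable_const)
  have hSm : ∀ c, MeasurableSet (S c) := fun c => hmeas (measurableSet_singleton c)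
  have h1' : ENNReal.ofReal (3 / 4) ≤ μ (S 1) := by
    refine h1.trans (measure_mono ?_)
    rintro ω ⟨_, hω⟩
    have := eq_of_approx hAr hω
    change out ω default p₀.1 p₀.2 = 1
    rw [Subsingleton.elim default (QueryMaps.resp (Qf ω) (_root_.vec n A)), ← this, hA1]
  have h2' : ENNReal.ofReal (3 / 4) ≤ μ (S 0) := by
    refine h2.trans (measure_mono ?_)
    rintro ω ⟨_, hω⟩
    have := eq_of_approx (by simp) hω
    change out ω default p₀.1 p₀.2 = 0
    rw [Subsingleton.elim default (QueryMaps.resp (Qf ω) (_root_.vec n 0)), ← this]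
    rfl
  have hdisj : Disjoint (S 1) (S 0) := by
    rw [Set.disjoint_left]
    intro ω ha hb
    have ha : out ω default p₀.1 p₀.2 = 1 := ha
    have hb : out ω default p₀.1 p₀.2 = 0 := hb
    rw [ha] at hb
    exact one_ne_zero hb
  have h3 := measure_union (μ := μ) hdisj (hSm 0)
  have h4 : ENNReal.ofReal (3 / 4) + ENNReal.ofReal (3 / 4) ≤ 1 :=
    (add_le_add h1' h2').trans (h3.symm.trans_le prob_le_one)
  rw [← ENNReal.ofReal_add (by norm_num) (by norm_num), ENNReal.ofReal_le_one] at h4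
  norm_num at h4
end Assembly

/-- Round lower bound for high-probability 2-approximate spectral norm low-rank
approximation of sparse matrices. -/
theorem sparse_spectral_LRA_round_lower_bound :
    ∃ (c C : ℝ) (m₀ : ℕ), 0 < c ∧ 0 < C ∧
      ∀ (m n r k t : ℕ), m₀ ≤ m → m ≤ n ^ 2 → 1 ≤ r →
        Real.sqrt m * r ≤ (k : ℝ) → k ≤ m →
      ∀ (Ω : Type) [MeasurableSpace Ω] (μ : Measure Ω) [IsProbabilityMeasure μ]
        (Qf : Ω → QueryMaps (n * n) k t)
        (out : Ω → (Fin t → Fin k → ℝ) → Matrix (Fin n) (Fin n) ℝ),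
        (∀ ω, (Qf ω).Valid) →
        (∀ (j : Fin t) (i : Fin k) (l : Fin (n * n)),
            Measurable fun p : Ω × (Fin (j : ℕ) → Fin k → ℝ) => Qf p.1 j p.2 i l) →
        (∀ i j : Fin n,
            Measurable fun p : Ω × (Fin t → Fin k → ℝ) => out p.1 p.2 i j) →
        (∀ A : Matrix (Fin n) (Fin n) ℝ,
            (Finset.univ.filter fun q : Fin n × Fin n => A q.1 q.2 ≠ 0).card ≤ m →
            1 - ENNReal.ofReal ((m : ℝ) ^ (-C)) ≤
              μ {ω | (out ω (QueryMaps.resp (Qf ω) (vec n A))).rank ≤ r ∧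
                    specNorm (A - out ω (QueryMaps.resp (Qf ω) (vec n A)))
                      ≤ 2 * singVal A (r + 1)}) →
        c * Real.log ((m : ℝ) / k) ≤ (t : ℝ) := by
  have hlog : 0 < Real.log 320000 := Real.log_pos (by norm_num)
  refine ⟨1 / (2 * Real.log 320000), 1, 4, by positivity, one_pos, ?_⟩
  intro m n r k t hm hmn hr hk hkm Ω _ μ _ Qf out _ hQ hO hsucc
  set s := Nat.sqrt m with hs
  have hs2 : 2 ≤ s := by
    rw [hs, Nat.le_sqrt]; omega
  have hsn : s ≤ n := by
    rw [hs, ← Nat.sqrt_eq' n]; exact Nat.sqrt_le_sqrt hmn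
  have hsm : s * s ≤ m := Nat.sqrt_le m
  have hms : m < (s + 1) * (s + 1) := Nat.lt_succ_sqrt m
  have hm' : (4 : ℝ) ≤ m := by exact_mod_cast hm
  have hsk : s * r ≤ k := by
    have h1 : (s : ℝ) ≤ √m := Real.nat_sqrt_le_real_sqrt
    have h2 : (s : ℝ) * r ≤ k := (mul_le_mul_of_nonneg_right h1 (by positivity)).trans hk
    exact_mod_cast h2
  have hp : ENNReal.ofReal (3 / 4) ≤ 1 - ENNReal.ofReal ((m : ℝ) ^ (-(1 : ℝ))) := by
    rw [Real.rpow_neg_one, ← ENNReal.ofReal_one, ← ENNReal.ofReal_sub _ (by positivity)]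
    apply ENNReal.ofReal_le_ofReal
    have : (m : ℝ)⁻¹ ≤ 4⁻¹ := inv_anti₀ (by norm_num) hm'
    linarith
  have hsucc' := fun A hA => hp.trans (hsucc A hA)
  have ht0 : t ≠ 0 := rounds_ne_zero hsn (by omega) hsm hr hO hsucc'
  have hthr := thr_lower_bound (μ := μ) hsn hs2 hr hsk hQ hO
    (fun a => hsucc' (pad hsn a) ((card_pad_le hsn a).trans hsm))
  have hs' : (2 : ℝ) ≤ s := by exact_mod_cast hs2
  have hsk' : s ≤ k := (Nat.le_mul_of_pos_right s hr).trans hsk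
  have hk0 : (0 : ℝ) < k := by
    have : (s : ℝ) ≤ k := by exact_mod_cast hsk'
    linarith
  have hmk : (m : ℝ) / k ≤ 320000 ^ (t + 1) := by
    have h1 : (m : ℝ) < (s + 1) * (s + 1) := by exact_mod_cast hms
    have h2 : 5000 * (s : ℝ) * s ≤ 4 * k * 320000 ^ (t + 1) := by
      have h3 : thr (k / s) (t + 1) * s = 4 * k * 320000 ^ (t + 1) := by
        rw [thr]; field_simp
      rw [← h3]
      exact mul_le_mul_of_nonneg_right hthr (by positivity)
    rw [div_le_iff₀ hk0]
    nlinarith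
  have hl : Real.log ((m : ℝ) / k) ≤ (t + 1) * Real.log 320000 := by
    have := Real.log_le_log (by positivity) hmk
    rw [Real.log_pow] at this
    exact_mod_cast this
  have ht1 : (1 : ℝ) ≤ t := by exact_mod_cast Nat.one_le_iff_ne_zero.2 ht0
  rw [div_mul_eq_mul_div, one_mul, div_le_iff₀ (by positivity)]
  nlinarith

end
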